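/- arXiv:0807.1170 — 3 statements merged into one kernel-verified Lean document; each statement's English description precedes it below -/
import Mathlib

section
/- Let p be a prime, K a finite extension of ℚ_p, and let L = K(√d) and E = K(√e) be two non-K-isomorphic quadratic extensions of K inside a fixed algebraic closure of K (i.e., d, e ∈ K* are non-squares with de ∉ (K*)²). Let LE denote the compositum of L and E, a quadratic extension of E. Then for every t ∈ E*: t ∈ N_{LE/E}((LE)*) if and only if N_{E/K}(t) ∈ N_{L/K}(L*). -/
open Module

/-- `normGroup K L` is the set of norms `N_{L/K}(t)` of nonzero elements `t ∈ L`. -/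
def normGroup (K L : Type*) [Field K] [Field L] [Algebra K L] : Set K :=
  {x : K | ∃ t : L, t ≠ 0 ∧ Algebra.norm K t = x}

open scoped NNReal

theorem Subgroup.index_range_powMonoidHom_two {A B : Type*} [CommGroup A] [CommGroup B]
    (φ : B →* A) (hφ : Function.Injective φ) (hfin : φ.range.index ≠ 0)
    (hB : ∀ b : B, b ^ 2 = 1 → b = 1) :
    (powMonoidHom 2 : A →* A).range.index =
      Nat.card (powMonoidHom 2 : A →* A).ker * (powMonoidHom 2 : B →* B).range.index := by
  set f : A →* A := powMonoidHom 2
  set g : B →* B := powMonoidHom 2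
  have hcomm : φ.range.map f = g.range.map φ := by
    rw [MonoidHom.range_eq_map, MonoidHom.range_eq_map, Subgroup.map_map, Subgroup.map_map]
    congr 1
    ext b
    simp [f, g]
  have hle : φ.range.map f ≤ φ.range := by
    rw [hcomm]; exact Subgroup.map_le_range _ _
  have hrel : (φ.range.map f).relIndex φ.range = g.range.index := by
    rw [hcomm, MonoidHom.range_eq_map φ, Subgroup.relIndex_map_map_of_injective _ _ hφ,
      Subgroup.relIndex_top_right]
  have himage : (φ.range.map f).relIndex f.range = (φ.range ⊔ f.ker).index := by
    rw [MonoidHom.range_eq_map f, Subgroup.relIndex_map_map, top_sup_eq,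
      Subgroup.relIndex_top_right]
  have hker : φ.range.relIndex (φ.range ⊔ f.ker) = Nat.card f.ker := by
    rw [Subgroup.relIndex_sup_left, ← Subgroup.inf_relIndex_right, ← Subgroup.relIndex_bot_left]
    congr 1
    rw [eq_bot_iff]
    rintro _ ⟨⟨b, rfl⟩, hb⟩
    have hb2 : b = 1 := hB b (hφ (by simpa [f] using hb))
    simp [hb2]
  have h1 := Subgroup.relIndex_mul_index hle
  have h2 := Subgroup.relIndex_mul_index (Subgroup.map_le_range f φ.range)
  have h3 := Subgroup.relIndex_mul_index (le_sup_left : φ.range ≤ φ.range ⊔ f.ker)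
  rw [hrel] at h1
  rw [himage] at h2
  rw [hker] at h3
  have hne : (φ.range ⊔ f.ker).index ≠ 0 := by
    intro h
    rw [h, mul_zero] at h3
    exact hfin h3.symm
  apply mul_left_cancel₀ hne
  rw [h2, ← h1, ← h3]
  ring

theorem Subgroup.index_range_powMonoidHom_two_int :
    (powMonoidHom 2 : Multiplicative ℤ →* Multiplicative ℤ).range.index = 2 := by
  rw [Subgroup.index_eq_two_iff]
  refine ⟨Multiplicative.ofAdd 1, fun b => ?_⟩
  have key : ∀ c : Multiplicative ℤ, c ∈ (powMonoidHom 2 : Multiplicative ℤ →* _).range ↔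
      Even c.toAdd := by
    intro c
    constructor
    · rintro ⟨x, rfl⟩
      exact ⟨x.toAdd, by simp [two_mul]⟩
    · rintro ⟨x, hx⟩
      refine ⟨Multiplicative.ofAdd x, Multiplicative.toAdd.injective ?_⟩
      simp [hx, two_mul]
  rw [key, key, toAdd_mul, toAdd_ofAdd, Int.even_add_one, xor_def]
  tauto

theorem MonoidHom.range_powMonoidHom_prod {G H : Type*} [CommGroup G] [CommGroup H] (n : ℕ) :
    (powMonoidHom n : G × H →* G × H).range =
      (powMonoidHom n : G →* G).range.prod (powMonoidHom n : H →* H).range := by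
  ext ⟨x, y⟩
  simp [Subgroup.mem_prod, Prod.ext_iff]

theorem card_ker_powMonoidHom_two (K : Type*) [Field K] [CharZero K] :
    Nat.card (powMonoidHom 2 : Kˣ →* Kˣ).ker = 2 := by
  have h : ((powMonoidHom 2 : Kˣ →* Kˣ).ker : Set Kˣ) = {1, -1} := by
    ext x
    rw [SetLike.mem_coe, MonoidHom.mem_ker, powMonoidHom_apply, Units.ext_iff,
      Units.val_pow_eq_pow_val, Units.val_one, ← one_pow 2, sq_eq_sq_iff_eq_or_eq_neg]
    simp only [Set.mem_insert_iff, Set.mem_singleton_iff, Units.ext_iff, Units.val_one,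
      Units.val_neg]
  change Nat.card ((powMonoidHom 2 : Kˣ →* Kˣ).ker : Set Kˣ) = 2
  rw [h, Nat.card_coe_set_eq, Set.ncard_pair]
  intro h
  have := congrArg Units.val h
  norm_num [eq_neg_iff_add_eq_zero] at this

/-- The additive subgroup `a • M` of an `R`-module `M`. -/
abbrev smulAddSubgroup {R : Type*} [CommRing R] (a : R) (M : Type*) [AddCommGroup M] [Module R M] :
    AddSubgroup M :=
  (DistribSMul.toAddMonoidHom M a).range

theorem index_smulAddSubgroup {R : Type*} [CommRing R] [Nontrivial R] (a : R) (M : Type*)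
    [AddCommGroup M] [Module R M] [Module.Free R M] [Module.Finite R M] :
    (smulAddSubgroup a M).index = (smulAddSubgroup a R).index ^ finrank R M := by
  have e := (Module.Free.chooseBasis R M).equivFun
  have hmap : (smulAddSubgroup a M).map (e.toAddEquiv : M →+ (Free.ChooseBasisIndex R M → R)) =
      AddSubgroup.pi Set.univ fun _ => smulAddSubgroup a R := by
    ext x
    constructor
    · rintro ⟨_, ⟨y, rfl⟩, rfl⟩ i _
      exact ⟨e y i, by simp⟩
    · intro hx
      choose y hy using fun i => hx i trivial
      refine ⟨_, ⟨e.symm y, rfl⟩, ?_⟩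
      ext i
      simpa using hy i
  rw [← AddSubgroup.index_map_equiv (smulAddSubgroup a M) e.toAddEquiv, hmap, AddSubgroup.index_pi,
    Finset.prod_const, Finset.card_univ, finrank_eq_card_chooseBasisIndex]

theorem PadicInt.index_smulAddSubgroup_ne_zero (p : ℕ) [Fact p.Prime] {a : ℤ_[p]} (ha : a ≠ 0) :
    (smulAddSubgroup a ℤ_[p]).index ≠ 0 := by
  have hle : (PadicInt.toZModPow (p := p) a.valuation).toAddMonoidHom.ker ≤
      smulAddSubgroup a ℤ_[p] := by
    intro x hx
    have hx' : x ∈ RingHom.ker (PadicInt.toZModPow (p := p) a.valuation) := hx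
    rw [PadicInt.ker_toZModPow, Ideal.mem_span_singleton] at hx'
    obtain ⟨y, rfl⟩ := hx'
    refine ⟨((PadicInt.unitCoeff ha)⁻¹ : ℤ_[p]ˣ) * y, ?_⟩
    have h := PadicInt.unitCoeff_spec ha
    simp only [DistribSMul.toAddMonoidHom_apply, smul_eq_mul]
    nth_rewrite 1 [h]
    calc _ = ((PadicInt.unitCoeff ha : ℤ_[p]ˣ) * ((PadicInt.unitCoeff ha)⁻¹ : ℤ_[p]ˣ) : ℤ_[p]) *
        (p ^ a.valuation * y) := by ring
      _ = _ := by rw [Units.mul_inv, one_mul]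
  refine ne_zero_of_dvd_ne_zero ?_ (AddSubgroup.index_dvd_of_le hle)
  rw [AddSubgroup.index_ker]
  have : NeZero (p ^ a.valuation) := ⟨pow_ne_zero _ (Fact.out : p.Prime).ne_zero⟩
  exact Nat.card_pos.ne'

section Local

variable {p : ℕ} [Fact p.Prime] {K : Type*} [NormedField K] [NormedAlgebra ℚ_[p] K]
  [Algebra ℤ_[p] K] [IsScalarTower ℤ_[p] ℚ_[p] K]

theorem norm_algebraMap_padicInt (a : ℤ_[p]) : ‖algebraMap ℤ_[p] K a‖ = ‖a‖ := by
  rw [IsScalarTower.algebraMap_apply ℤ_[p] ℚ_[p] K, norm_algebraMap']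
  rfl

theorem mem_integralClosure_padicInt_iff [FiniteDimensional ℚ_[p] K] (x : K) :
    x ∈ integralClosure ℤ_[p] K ↔ ‖x‖ ≤ 1 := by
  rw [NormedAlgebra.norm_eq_spectralNorm ℚ_[p], spectralNorm,
    spectralValue_le_one_iff (minpoly.monic (IsIntegral.of_finite ℚ_[p] x))]
  constructor
  · intro hx n
    rw [minpoly.isIntegrallyClosed_eq_field_fractions' ℚ_[p] (R := ℤ_[p]) hx, Polynomial.coeff_map]
    exact PadicInt.norm_le_one _
  · intro hx
    have hlift : minpoly ℚ_[p] x ∈ Polynomial.lifts (algebraMap ℤ_[p] ℚ_[p]) :=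
      (Polynomial.lifts_iff_coeff_lifts _).2 fun n => ⟨⟨_, hx n⟩, rfl⟩
    obtain ⟨q, hq, -, hmonic⟩ := Polynomial.lifts_and_natDegree_eq_and_monic hlift
      (minpoly.monic (IsIntegral.of_finite ℚ_[p] x))
    refine ⟨q, hmonic, ?_⟩
    rw [← Polynomial.aeval_def, ← Polynomial.aeval_map_algebraMap ℚ_[p], hq, minpoly.aeval]

theorem mem_smulAddSubgroup_integralClosure [FiniteDimensional ℚ_[p] K] {a : ℤ_[p]} (ha : a ≠ 0)
    (x : integralClosure ℤ_[p] K) :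
    x ∈ smulAddSubgroup a (integralClosure ℤ_[p] K) ↔ ‖(x : K)‖ ≤ ‖a‖ := by
  have haK : ‖algebraMap ℤ_[p] K a‖ = ‖a‖ := norm_algebraMap_padicInt a
  have ha0 : 0 < ‖a‖ := norm_pos_iff.2 ha
  have haK0 : algebraMap ℤ_[p] K a ≠ 0 := norm_ne_zero_iff.1 (by rw [haK]; exact ha0.ne')
  constructor
  · rintro ⟨y, rfl⟩
    have hy := (mem_integralClosure_padicInt_iff (p := p) (y : K)).1 y.2
    simpa [Algebra.smul_def, haK] using mul_le_of_le_one_right ha0.le hy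
  · intro hx
    refine ⟨⟨(x : K) / algebraMap ℤ_[p] K a, ?_⟩, Subtype.ext ?_⟩
    · rwa [mem_integralClosure_padicInt_iff, norm_div, haK, div_le_one ha0]
    · simp [Algebra.smul_def, mul_div_cancel₀, haK0]

/-- The units of norm one at distance at most `r` from `1`. -/
def unitsNear (K : Type*) [NormedField K] [IsUltrametricDist K] (r : ℝ≥0) : Subgroup Kˣ where
  carrier := {x | ‖(x : K)‖ = 1 ∧ ‖(x : K) - 1‖ ≤ r}
  one_mem' := by simp
  mul_mem' := by
    rintro x y ⟨hx, hx1⟩ ⟨hy, hy1⟩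
    refine ⟨by simp [hx, hy], ?_⟩
    have : ((x * y : Kˣ) : K) - 1 = x * (y - 1) + (x - 1) := by rw [Units.val_mul]; ring
    rw [this]
    refine (IsUltrametricDist.norm_add_le_max _ _).trans (max_le ?_ hx1)
    rwa [norm_mul, hx, one_mul]
  inv_mem' := by
    rintro x ⟨hx, hx1⟩
    refine ⟨by simp [hx], ?_⟩
    have : ((x⁻¹ : Kˣ) : K) - 1 = -(x : K)⁻¹ * (x - 1) := by
      have := x.ne_zero
      rw [Units.val_inv_eq_inv_val]
      field_simp
      ring
    rw [this, norm_mul, norm_neg, norm_inv, hx]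
    simpa using hx1

theorem mem_unitsNear {K : Type*} [NormedField K] [IsUltrametricDist K] {r : ℝ≥0} {x : Kˣ} :
    x ∈ unitsNear K r ↔ ‖(x : K)‖ = 1 ∧ ‖(x : K) - 1‖ ≤ r := Iff.rfl

theorem norm_eq_one_of_norm_sub_one_lt {K : Type*} [NormedField K] [IsUltrametricDist K] {x : K}
    (h : ‖x - 1‖ < 1) : ‖x‖ = 1 := by
  have := IsUltrametricDist.norm_add_eq_max_of_norm_ne_norm (x := x - 1) (y := 1)
    (by rw [norm_one]; exact h.ne)
  rwa [sub_add_cancel, norm_one, max_eq_right h.le] at this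

theorem relIndex_unitsNear [FiniteDimensional ℚ_[p] K] [IsUltrametricDist K]
    {a b : ℤ_[p]} (ha : a ≠ 0) (hb : b ≠ 0) (hb1 : ‖b‖ < 1) :
    (unitsNear K ‖a * b‖₊).relIndex (unitsNear K ‖b‖₊) =
      (smulAddSubgroup a (integralClosure ℤ_[p] K)).index := by
  have hbK : ‖algebraMap ℤ_[p] K b‖ = ‖b‖ := norm_algebraMap_padicInt b
  have hb0 : 0 < ‖b‖ := norm_pos_iff.2 hb
  have hbK0 : algebraMap ℤ_[p] K b ≠ 0 := norm_ne_zero_iff.1 (by rw [hbK]; exact hb0.ne')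
  have hint : ∀ u : unitsNear K ‖b‖₊,
      ((u : Kˣ) - 1 : K) / algebraMap ℤ_[p] K b ∈ integralClosure ℤ_[p] K := by
    intro u
    rw [mem_integralClosure_padicInt_iff, norm_div, hbK, div_le_one hb0]
    exact u.2.2
  let f : unitsNear K ‖b‖₊ →
      integralClosure ℤ_[p] K ⧸ smulAddSubgroup a (integralClosure ℤ_[p] K) :=
    fun u => QuotientAddGroup.mk ⟨_, hint u⟩
  have hf : ∀ u v, f u = f v ↔ u⁻¹ * v ∈ (unitsNear K ‖a * b‖₊).subgroupOf (unitsNear K ‖b‖₊) := by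
    intro u v
    rw [QuotientAddGroup.eq, mem_smulAddSubgroup_integralClosure ha, Subgroup.mem_subgroupOf,
      mem_unitsNear]
    have hu : ‖((u : Kˣ) : K)‖ = 1 := u.2.1
    have hv : ‖((v : Kˣ) : K)‖ = 1 := v.2.1
    have hu0 : ((u : Kˣ) : K) ≠ 0 := Units.ne_zero _
    have e1 : -(((u : Kˣ) - 1 : K) / algebraMap ℤ_[p] K b) +
        ((v : Kˣ) - 1 : K) / algebraMap ℤ_[p] K b =
        ((v : Kˣ) - (u : Kˣ) : K) / algebraMap ℤ_[p] K b := by ring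
    have e2 : (((u⁻¹ * v : unitsNear K ‖b‖₊) : Kˣ) : K) - 1 =
        ((u : Kˣ) : K)⁻¹ * ((v : Kˣ) - (u : Kˣ) : K) := by
      rw [mul_sub, inv_mul_cancel₀ hu0]
      simp
    rw [e2, norm_mul, norm_inv, hu, inv_one, one_mul]
    simp only [Subalgebra.coe_add, Subalgebra.coe_neg]
    rw [e1, norm_div, hbK, div_le_iff₀ hb0]
    simp [hu, hv]
  have hsurj : Function.Surjective f := by
    intro y
    obtain ⟨y, rfl⟩ := QuotientAddGroup.mk_surjective y
    have hy := (mem_integralClosure_padicInt_iff (p := p) (y : K)).1 y.2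
    have h1 : ‖algebraMap ℤ_[p] K b * y‖ ≤ ‖b‖ := by
      rw [norm_mul, hbK]
      exact mul_le_of_le_one_right hb0.le hy
    have h2 : ‖1 + algebraMap ℤ_[p] K b * y‖ = 1 := norm_eq_one_of_norm_sub_one_lt (by
      rw [add_sub_cancel_left]; exact h1.trans_lt hb1)
    have h3 : 1 + algebraMap ℤ_[p] K b * y ≠ 0 := norm_ne_zero_iff.1 (by rw [h2]; exact one_ne_zero)
    refine ⟨⟨Units.mk0 _ h3, h2, by simpa using h1⟩, ?_⟩
    refine congrArg QuotientAddGroup.mk (Subtype.ext ?_)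
    simp [hbK0]
  refine Nat.card_eq_of_bijective (Quotient.lift f fun u v h => (hf u v).2 ?_) ⟨?_, ?_⟩
  · exact QuotientGroup.leftRel_apply.1 h
  · rintro ⟨u⟩ ⟨v⟩ h
    exact QuotientGroup.eq.2 ((hf u v).1 h)
  · intro y
    obtain ⟨u, rfl⟩ := hsurj y
    exact ⟨QuotientGroup.mk u, rfl⟩

theorem map_sq_unitsNear [IsUltrametricDist K] [CompleteSpace K] {b : ℤ_[p]}
    (hb : ‖b‖ < ‖(2 : ℤ_[p])‖) :
    (unitsNear K ‖b‖₊).map (powMonoidHom 2) = unitsNear K ‖2 * b‖₊ := by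
  have h2K : ‖(2 : K)‖ = ‖(2 : ℤ_[p])‖ := by
    rw [← norm_algebraMap_padicInt (K := K), map_ofNat]
  have h20 : 0 < ‖(2 : K)‖ := h2K ▸ (norm_nonneg b).trans_lt hb
  have h2ne : (2 : K) ≠ 0 := norm_pos_iff.1 h20
  have hb1 : ‖b‖ < 1 := hb.trans_le (PadicInt.norm_le_one _)
  have hr : ((‖2 * b‖₊ : ℝ≥0) : ℝ) = ‖(2 : K)‖ * ‖b‖ := by rw [h2K, coe_nnnorm, norm_mul]
  rw [← h2K] at hb
  apply le_antisymm
  · rintro _ ⟨x, ⟨hx, hx1⟩, rfl⟩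
    refine ⟨by simp [hx], ?_⟩
    have : (((powMonoidHom 2) x : Kˣ) : K) - 1 = ((x - 1) + 2) * (x - 1) := by
      rw [powMonoidHom_apply, Units.val_pow_eq_pow_val]; ring
    rw [this, norm_mul, hr]
    refine mul_le_mul ?_ hx1 (norm_nonneg _) h20.le
    exact (IsUltrametricDist.norm_add_le_max _ _).trans (max_le (hx1.trans hb.le) le_rfl)
  · rintro z ⟨hz, hz1⟩
    rw [hr] at hz1
    let f : K → K := fun u => (z - 1) / 2 - u ^ 2 / 2
    set s : Set K := Metric.closedBall 0 ‖b‖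
    have hmaps : Set.MapsTo f s s := by
      intro u hu
      rw [mem_closedBall_zero_iff] at hu ⊢
      simp only [f, sub_eq_add_neg (_ / _)]
      refine (IsUltrametricDist.norm_add_le_max ((z - 1) / 2 : K) (-(u ^ 2 / 2))).trans
        (max_le ?_ ?_)
      · rwa [norm_div, div_le_iff₀' h20]
      · rw [norm_neg, norm_div, norm_pow, div_le_iff₀ h20, sq]
        exact mul_le_mul hu (hu.trans hb.le) (norm_nonneg _) (norm_nonneg _)
    have hcontr : ContractingWith (‖b‖₊ / ‖(2 : K)‖₊) (hmaps.restrict f s s) := by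
      refine ⟨(div_lt_one (by exact_mod_cast h20)).2 (by exact_mod_cast hb),
        LipschitzWith.of_dist_le_mul ?_⟩
      rintro ⟨u, hu⟩ ⟨v, hv⟩
      rw [mem_closedBall_zero_iff] at hu hv
      rw [Subtype.dist_eq, Subtype.dist_eq, dist_eq_norm, dist_eq_norm]
      have : f u - f v = -((u + v) / 2 * (u - v)) := by simp only [f]; ring
      simp only [Set.MapsTo.val_restrict_apply]
      rw [this, norm_neg, norm_mul, norm_div, NNReal.coe_div, coe_nnnorm, coe_nnnorm]
      gcongr
      exact (IsUltrametricDist.norm_add_le_max _ _).trans (max_le hu hv)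
    obtain ⟨u, hu, hfix, -⟩ := ContractingWith.exists_fixedPoint' (x := 0)
      Metric.isClosed_closedBall.isComplete hmaps hcontr
      (mem_closedBall_zero_iff.2 (by simp)) (edist_ne_top _ _)
    rw [mem_closedBall_zero_iff] at hu
    have hu1 : ‖1 + u‖ = 1 := norm_eq_one_of_norm_sub_one_lt (by
      rw [add_sub_cancel_left]; exact hu.trans_lt hb1)
    refine ⟨Units.mk0 (1 + u) (norm_ne_zero_iff.1 (by rw [hu1]; exact one_ne_zero)),
      ⟨hu1, by simpa using hu⟩, Units.ext ?_⟩
    have hfix' : (z - 1) / 2 - u ^ 2 / 2 = u := hfix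
    simp only [powMonoidHom_apply, Units.val_pow_eq_pow_val, Units.val_mk0]
    field_simp at hfix'
    linear_combination -hfix'

theorem index_smulAddSubgroup_integralClosure [FiniteDimensional ℚ_[p] K] (a : ℤ_[p]) :
    (smulAddSubgroup a (integralClosure ℤ_[p] K)).index =
      (smulAddSubgroup a ℤ_[p]).index ^ finrank ℚ_[p] K := by
  have : IsTorsionFree ℤ_[p] K := IsTorsionFree.trans_faithfulSMul ℤ_[p] ℚ_[p] K
  have : Module.Free ℤ_[p] (integralClosure ℤ_[p] K) :=
    IsIntegralClosure.module_free ℤ_[p] ℚ_[p] K _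
  have : Module.Finite ℤ_[p] (integralClosure ℤ_[p] K) :=
    IsIntegralClosure.finite ℤ_[p] ℚ_[p] K _
  rw [index_smulAddSubgroup, IsIntegralClosure.rank ℤ_[p] ℚ_[p] K (integralClosure ℤ_[p] K)]

theorem index_range_sq_subgroup {G : Type*} [CommGroup G] (V : Subgroup G) :
    (powMonoidHom 2 : V →* V).range.index = (V.map (powMonoidHom 2)).relIndex V := by
  rw [Subgroup.relIndex]
  congr 1
  ext x
  simp [Subgroup.mem_subgroupOf, Subtype.ext_iff]

/-- The homomorphism `(k, v) ↦ ϖᵏ v`. -/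
noncomputable def zpowMulUnitsNear {K : Type*} [NormedField K] [IsUltrametricDist K]
    (ϖ : Kˣ) (r : ℝ≥0) :
    Multiplicative ℤ × unitsNear K r →* Kˣ :=
  (zpowersHom Kˣ ϖ).coprod (unitsNear K r).subtype

theorem zpowMulUnitsNear_apply {K : Type*} [NormedField K] [IsUltrametricDist K]
    (ϖ : Kˣ) (r : ℝ≥0) (x : Multiplicative ℤ × unitsNear K r) :
    zpowMulUnitsNear ϖ r x = ϖ ^ x.1.toAdd * x.2 := rfl

theorem zpowMulUnitsNear_injective {K : Type*} [NormedField K] [IsUltrametricDist K]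
    {ϖ : Kˣ} (hϖ : ‖(ϖ : K)‖ < 1) (r : ℝ≥0) :
    Function.Injective (zpowMulUnitsNear ϖ r) := by
  rw [injective_iff_map_eq_one]
  rintro ⟨k, v⟩ h
  rw [zpowMulUnitsNear_apply] at h
  have hk : k.toAdd = 0 := by
    have := congrArg (fun x : Kˣ => ‖(x : K)‖) h
    simp [v.2.1] at this
    exact (zpow_eq_one_iff_right₀ (norm_nonneg _) hϖ.ne).1 this
  simp only [hk, zpow_zero, one_mul] at h
  exact Prod.ext hk (Subtype.ext h)

theorem index_range_zpowMulUnitsNear_ne_zero [FiniteDimensional ℚ_[p] K] [IsUltrametricDist K]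
    {ϖ : Kˣ} (hϖ : (ϖ : K) = p) {b : ℤ_[p]} (hb : b ≠ 0) :
    (zpowMulUnitsNear ϖ ‖b‖₊).range.index ≠ 0 := by
  have hp1 : (1 : ℝ) < p := by exact_mod_cast (Fact.out : p.Prime).one_lt
  have hp0 : (p : ℤ_[p]) ≠ 0 := by exact_mod_cast (Fact.out : p.Prime).ne_zero
  have hb0 : 0 < ‖b‖ := norm_pos_iff.2 hb
  have hϖn : ‖(ϖ : K)‖ = (p : ℝ)⁻¹ := by
    rw [hϖ, ← map_natCast (algebraMap ℤ_[p] K), norm_algebraMap_padicInt, PadicInt.norm_p]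
  have hrep : ∀ x : Kˣ, ∃ k : ℤ, (p : ℝ)⁻¹ < ‖((ϖ ^ k * x : Kˣ) : K)‖ ∧
      ‖((ϖ ^ k * x : Kˣ) : K)‖ ≤ 1 := by
    intro x
    obtain ⟨n, hn1, hn2⟩ := exists_mem_Ioc_zpow (norm_pos_iff.2 x.ne_zero) hp1
    refine ⟨n + 1, ?_⟩
    have hpos : (0 : ℝ) < (p : ℝ) ^ (n + 1) := zpow_pos (by positivity) _
    have hnorm : ‖((ϖ ^ (n + 1) * x : Kˣ) : K)‖ = ‖(x : K)‖ / (p : ℝ) ^ (n + 1) := by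
      rw [Units.val_mul, Units.val_zpow_eq_zpow_val, norm_mul, norm_zpow, hϖn, inv_zpow]
      ring
    rw [hnorm, div_le_one hpos, lt_div_iff₀ hpos]
    refine ⟨?_, hn2⟩
    rwa [zpow_add_one₀ (by positivity), mul_comm, mul_assoc, mul_inv_cancel₀ (by positivity),
      mul_one]
  choose k hk1 hk2 using hrep
  have hfin : Finite (integralClosure ℤ_[p] K ⧸
      smulAddSubgroup ((p : ℤ_[p]) * b) (integralClosure ℤ_[p] K)) := by
    rw [← AddSubgroup.index_ne_zero_iff_finite, index_smulAddSubgroup_integralClosure]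
    exact pow_ne_zero _ (PadicInt.index_smulAddSubgroup_ne_zero p (mul_ne_zero hp0 hb))
  let f : Kˣ ⧸ (zpowMulUnitsNear ϖ ‖b‖₊).range → integralClosure ℤ_[p] K ⧸
      smulAddSubgroup ((p : ℤ_[p]) * b) (integralClosure ℤ_[p] K) := fun q =>
    QuotientAddGroup.mk ⟨_, (mem_integralClosure_padicInt_iff (p := p) _).2 (hk2 q.out)⟩
  have hf : Function.Injective f := by
    intro q q' h
    rw [← q.out_eq, ← q'.out_eq]
    rw [QuotientAddGroup.eq, mem_smulAddSubgroup_integralClosure (mul_ne_zero hp0 hb)] at h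
    set x := q.out
    set y := q'.out
    simp only [Subalgebra.coe_add, Subalgebra.coe_neg] at h
    set x' := ϖ ^ k x * x with hx'
    set y' := ϖ ^ k y * y with hy'
    have hx0 : 0 < ‖(x' : K)‖ := norm_pos_iff.2 x'.ne_zero
    have hsub : ‖((x'⁻¹ * y' : Kˣ) : K) - 1‖ < ‖b‖ := by
      have e : ((x'⁻¹ * y' : Kˣ) : K) - 1 = (-(x' : K) + y') / x' := by
        have := x'.ne_zero
        rw [Units.val_mul, Units.val_inv_eq_inv_val]
        field_simp
        ring
      rw [e, norm_div, div_lt_iff₀ hx0]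
      refine h.trans_lt ?_
      rw [norm_mul, PadicInt.norm_p, mul_comm]
      exact mul_lt_mul_of_pos_left (hk1 x) hb0
    have hmem : x'⁻¹ * y' ∈ unitsNear K ‖b‖₊ :=
      ⟨norm_eq_one_of_norm_sub_one_lt (hsub.trans_le (PadicInt.norm_le_one b)), hsub.le⟩
    refine QuotientGroup.eq.2 ⟨(Multiplicative.ofAdd (k x - k y), ⟨_, hmem⟩), ?_⟩
    change ϖ ^ (k x - k y) * (x'⁻¹ * y') = x⁻¹ * y
    rw [hx', hy', zpow_sub, mul_inv]
    calc _ = (ϖ ^ k x * (ϖ ^ k x)⁻¹) * ((ϖ ^ k y)⁻¹ * ϖ ^ k y) * (x⁻¹ * y) := by ac_rfl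
      _ = _ := by simp
  exact Subgroup.index_ne_zero_iff_finite.2 (Finite.of_injective f hf)

theorem index_range_sq_units_of_normed [FiniteDimensional ℚ_[p] K] [IsUltrametricDist K]
    [CompleteSpace K] :
    (powMonoidHom 2 : Kˣ →* Kˣ).range.index =
      4 * (smulAddSubgroup (2 : ℤ_[p]) ℤ_[p]).index ^ finrank ℚ_[p] K := by
  have hp : (p : ℤ_[p]) ≠ 0 := by exact_mod_cast (Fact.out : p.Prime).ne_zero
  have : CharZero K := charZero_of_injective_algebraMap (algebraMap ℚ_[p] K).injective
  have hpK : (p : K) ≠ 0 := by exact_mod_cast (Fact.out : p.Prime).ne_zero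
  have hpn' : ‖(p : ℤ_[p])‖ < 1 := PadicInt.norm_lt_one_iff_dvd _ |>.2 dvd_rfl
  have hpn : ‖(p : K)‖ < 1 := by
    rw [← map_natCast (algebraMap ℤ_[p] K), norm_algebraMap_padicInt]
    exact hpn'
  have h2K : ‖(2 : K)‖ = ‖(2 : ℤ_[p])‖ := by
    rw [← norm_algebraMap_padicInt (K := K), map_ofNat]
  set b : ℤ_[p] := p * 2
  have hb : b ≠ 0 := mul_ne_zero hp two_ne_zero
  have hb2 : ‖b‖ < ‖(2 : ℤ_[p])‖ := by
    rw [norm_mul]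
    exact mul_lt_of_lt_one_left (norm_pos_iff.2 two_ne_zero) hpn'
  rw [Subgroup.index_range_powMonoidHom_two (zpowMulUnitsNear (Units.mk0 (p : K) hpK) ‖b‖₊)
    (zpowMulUnitsNear_injective hpn _) (index_range_zpowMulUnitsNear_ne_zero rfl hb),
    card_ker_powMonoidHom_two, MonoidHom.range_powMonoidHom_prod, Subgroup.index_prod,
    Subgroup.index_range_powMonoidHom_two_int, index_range_sq_subgroup, map_sq_unitsNear hb2,
    relIndex_unitsNear two_ne_zero hb (hb2.trans_le (PadicInt.norm_le_one _)),
    index_smulAddSubgroup_integralClosure, ← mul_assoc]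
  · norm_num
  · rintro ⟨k, v⟩ h
    obtain ⟨hk, hv⟩ := Prod.ext_iff.1 h
    refine Prod.ext ?_ (Subtype.ext (Units.ext ?_))
    · apply Multiplicative.toAdd.injective
      have := congrArg Multiplicative.toAdd hk
      simpa using this
    · have hv' : ((v : Kˣ) : K) ^ 2 = 1 ^ 2 := by
        rw [one_pow]
        exact congrArg (fun w : unitsNear K ‖b‖₊ => ((w : Kˣ) : K)) hv
      rcases sq_eq_sq_iff_eq_or_eq_neg.1 hv' with h1 | h1
      · simpa using h1
      · have h3 : ‖((v : Kˣ) : K) - 1‖ ≤ ‖b‖ := v.2.2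
        rw [h1, ← neg_add', one_add_one_eq_two, norm_neg, h2K] at h3
        exact absurd h3 hb2.not_ge

end Local

theorem index_range_sq_units (p : ℕ) [Fact p.Prime] (K : Type*) [Field K] [Algebra ℚ_[p] K]
    [FiniteDimensional ℚ_[p] K] :
    (powMonoidHom 2 : Kˣ →* Kˣ).range.index =
      4 * (smulAddSubgroup (2 : ℤ_[p]) ℤ_[p]).index ^ finrank ℚ_[p] K := by
  let : NormedField K := spectralNorm.normedField ℚ_[p] K
  let : NormedAlgebra ℚ_[p] K := spectralNorm.normedAlgebra ℚ_[p] K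
  let : Algebra ℤ_[p] K := ((algebraMap ℚ_[p] K).comp (algebraMap ℤ_[p] ℚ_[p])).toAlgebra
  have : IsScalarTower ℤ_[p] ℚ_[p] K := IsScalarTower.of_algebraMap_eq fun _ => rfl
  have : IsUltrametricDist K := IsUltrametricDist.isUltrametricDist_of_isNonarchimedean_norm
    isNonarchimedean_spectralNorm
  have : CompleteSpace K := FiniteDimensional.complete ℚ_[p] K
  exact index_range_sq_units_of_normed

/-- The group of nonzero values of the binary form `u² - a v²`. -/
def normFormSubgroup {K : Type*} [Field K] (a : K) : Subgroup Kˣ where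
  carrier := {x | ∃ u v : K, (x : K) = u ^ 2 - a * v ^ 2}
  one_mem' := ⟨1, 0, by simp⟩
  mul_mem' := by
    rintro x y ⟨u, v, hx⟩ ⟨u', v', hy⟩
    exact ⟨u * u' + a * v * v', u * v' + v * u', by rw [Units.val_mul, hx, hy]; ring⟩
  inv_mem' := by
    rintro x ⟨u, v, hx⟩
    refine ⟨u / x, v / x, ?_⟩
    have := x.ne_zero
    rw [Units.val_inv_eq_inv_val]
    field_simp
    exact hx

theorem mem_normFormSubgroup {K : Type*} [Field K] {a : K} {x : Kˣ} :
    x ∈ normFormSubgroup a ↔ ∃ u v : K, (x : K) = u ^ 2 - a * v ^ 2 := Iff.rfl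

theorem fact_of_not_isSquare {K : Type*} [Field K] {a : K} (ha : ¬ IsSquare a) :
    Fact (∀ r : K, r ^ 2 ≠ a + 0 * r) :=
  ⟨fun r hr => ha ⟨r, by rw [← pow_two, hr]; ring⟩⟩

theorem index_normFormSubgroup_mul {K : Type*} [Field K] [CharZero K] {a : K}
    [Fact (∀ r : K, r ^ 2 ≠ a + 0 * r)] :
    (normFormSubgroup a).index *
      (2 * (powMonoidHom 2 : (QuadraticAlgebra K a 0)ˣ →* (QuadraticAlgebra K a 0)ˣ).range.index) =
      (powMonoidHom 2 : Kˣ →* Kˣ).range.index ^ 2 := by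
  have ha : ¬ IsSquare a := by
    rintro ⟨r, hr⟩
    exact (Fact.out : ∀ r : K, r ^ 2 ≠ a + 0 * r) r (by rw [hr]; ring)
  have ha0 : a ≠ 0 := by rintro rfl; exact ha ⟨0, by simp⟩
  set ι : Kˣ →* (QuadraticAlgebra K a 0)ˣ := Units.map (algebraMap K (QuadraticAlgebra K a 0))
  set N : (QuadraticAlgebra K a 0)ˣ →* Kˣ :=
    Units.map (QuadraticAlgebra.norm : QuadraticAlgebra K a 0 →* K)
  set SK := (powMonoidHom 2 : Kˣ →* Kˣ).range
  set SL := (powMonoidHom 2 : (QuadraticAlgebra K a 0)ˣ →* (QuadraticAlgebra K a 0)ˣ).range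
  have hrange : N.range = normFormSubgroup a := by
    ext x
    rw [mem_normFormSubgroup]
    constructor
    · rintro ⟨z, rfl⟩
      exact ⟨z.1.re, z.1.im, by simp [N, QuadraticAlgebra.norm_def]; ring⟩
    · rintro ⟨u, v, h⟩
      have hz : (⟨u, v⟩ : QuadraticAlgebra K a 0) ≠ 0 := by
        intro hz
        have h1 := congrArg QuadraticAlgebra.re hz
        have h2 := congrArg QuadraticAlgebra.im hz
        simp at h1 h2
        exact x.ne_zero (by rw [h, h1, h2]; ring)
      refine ⟨Units.mk0 _ hz, Units.ext ?_⟩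
      simp [N, QuadraticAlgebra.norm_def, h]; ring
  have hcomap : SK.comap N = ι.range ⊔ SL := by
    apply le_antisymm
    · rintro z ⟨c, hc⟩
      have hc' : (c : K) ^ 2 = z.1.re ^ 2 - a * z.1.im ^ 2 := by
        have := congrArg Units.val hc
        simp [N, QuadraticAlgebra.norm_def] at this
        rw [this]; ring
      have hsq : (z.1 + algebraMap K _ (c : K)) ^ 2 = algebraMap K _ (2 * (z.1.re + c)) * z.1 := by
        rw [sq]
        ext
        · simp
          linear_combination hc'
        · simp
          ring
      by_cases hw : z.1 + algebraMap K _ (c : K) = 0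
      · refine Subgroup.mem_sup_left ⟨-c, Units.ext ?_⟩
        simp [ι, eq_neg_of_add_eq_zero_left hw]
      · have hk : 2 * (z.1.re + c) ≠ 0 := by
          intro hk
          rw [hk, map_zero, zero_mul] at hsq
          exact hw (pow_eq_zero_iff two_ne_zero |>.1 hsq)
        have hz : z = ι (Units.mk0 _ hk)⁻¹ * Units.mk0 _ hw ^ 2 := by
          rw [map_inv, eq_inv_mul_iff_mul_eq]
          exact Units.ext hsq.symm
        rw [hz]
        exact mul_mem (Subgroup.mem_sup_left ⟨_, rfl⟩) (Subgroup.mem_sup_right ⟨_, rfl⟩)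
    · rw [sup_le_iff]
      constructor
      · rintro _ ⟨c, rfl⟩
        exact ⟨c, Units.ext (by simp [N, ι])⟩
      · rintro _ ⟨z, rfl⟩
        exact ⟨N z, by simp⟩
  have hιcomap : SK.relIndex (SL.comap ι) = 2 := by
    rw [Subgroup.relIndex_eq_two_iff]
    have hSL : ∀ c : Kˣ, c ∈ SL.comap ι ↔ IsSquare (c : K) ∨ IsSquare (c * a : K) := by
      intro c
      constructor
      · rintro ⟨z, hz⟩
        have hz' := congrArg Units.val hz
        have h1 := congrArg QuadraticAlgebra.re hz'
        have h2 := congrArg QuadraticAlgebra.im hz'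
        simp [ι, sq] at h1 h2
        have h3 : z.1.re * z.1.im = 0 := by linear_combination h2 / 2
        rcases mul_eq_zero.1 h3 with h | h
        · exact Or.inr ⟨a * z.1.im, by rw [← h1, h]; ring⟩
        · exact Or.inl ⟨z.1.re, by rw [← h1, h]; ring⟩
      · rintro (⟨x, hx⟩ | ⟨x, hx⟩)
        · have hx0 : x ≠ 0 := by rintro rfl; simp at hx
          have hc : c = Units.mk0 x hx0 ^ 2 := Units.ext (by simp [hx, sq])
          exact ⟨ι (Units.mk0 x hx0), by rw [hc, powMonoidHom_apply, map_pow]⟩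
        · have hx0 : x ≠ 0 := by rintro rfl; simp [ha0] at hx
          have hw : (⟨0, x / a⟩ : QuadraticAlgebra K a 0) ≠ 0 := by
            intro hw
            have := congrArg QuadraticAlgebra.im hw
            simp [hx0, ha0] at this
          refine ⟨Units.mk0 _ hw, Units.ext ?_⟩
          ext
          · simp [ι, sq]
            field_simp
            linear_combination -hx
          · simp [ι, sq]
    have hSKmem : ∀ c : Kˣ, c ∈ SK ↔ IsSquare (c : K) := by
      intro c
      constructor
      · rintro ⟨x, rfl⟩
        exact ⟨x, by simp [sq]⟩
      · rintro ⟨x, hx⟩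
        have hx0 : x ≠ 0 := by rintro rfl; simp at hx
        exact ⟨Units.mk0 x hx0, Units.ext (by simp [hx, sq])⟩
    refine ⟨Units.mk0 a ha0, (hSL _).2 (Or.inr ⟨a, rfl⟩), fun b hb => ?_⟩
    rw [hSKmem, hSKmem, Units.val_mul, Units.val_mk0]
    refine (xor_iff_or_and_not_and _ _).2 ⟨((hSL b).1 hb).symm, fun ⟨h1, h2⟩ => ha ?_⟩
    have := h1.div h2
    rwa [mul_div_cancel_left₀ _ b.ne_zero] at this
  have hSK : SK ≤ N.range := by
    rintro _ ⟨c, rfl⟩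
    exact ⟨ι c, Units.ext (by simp [N, ι])⟩
  have hSKι : SK ≤ SL.comap ι := by
    rintro _ ⟨c, rfl⟩
    exact ⟨ι c, by simp⟩
  have h1 := Subgroup.relIndex_mul_index hSK
  have h2 := Subgroup.relIndex_mul_index hSKι
  have h3 := Subgroup.relIndex_mul_index (le_sup_right : SL ≤ ι.range ⊔ SL)
  rw [Subgroup.relIndex_sup_right, ← Subgroup.index_comap, ← hcomap,
    Subgroup.index_comap SK N] at h3
  rw [hιcomap] at h2
  rw [hrange] at h1 h3
  rw [← h3]
  calc _ = (SK.relIndex (normFormSubgroup a) * (normFormSubgroup a).index) *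
        (2 * (SL.comap ι).index) := by ring
    _ = _ := by rw [h1, h2, sq]

theorem index_normFormSubgroup (p : ℕ) [Fact p.Prime] {K : Type*} [Field K] [Algebra ℚ_[p] K]
    [FiniteDimensional ℚ_[p] K] {a : K} (ha : ¬ IsSquare a) :
    (normFormSubgroup a).index = 2 := by
  have : CharZero K := charZero_of_injective_algebraMap (algebraMap ℚ_[p] K).injective
  have := fact_of_not_isSquare ha
  have : FiniteDimensional ℚ_[p] (QuadraticAlgebra K a 0) := Module.Finite.trans K _
  have h := index_normFormSubgroup_mul (a := a)
  have hc := PadicInt.index_smulAddSubgroup_ne_zero p (two_ne_zero : (2 : ℤ_[p]) ≠ 0)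
  rw [index_range_sq_units p, index_range_sq_units p,
    ← finrank_mul_finrank ℚ_[p] K (QuadraticAlgebra K a 0), QuadraticAlgebra.finrank_eq_two,
    pow_mul] at h
  refine mul_right_cancel₀ (pow_ne_zero 2 (pow_ne_zero (finrank ℚ_[p] K) hc)) ?_
  nlinarith

theorem mem_normFormSubgroup_comm {K : Type*} [Field K] [NeZero (2 : K)] {a b : Kˣ} :
    a ∈ normFormSubgroup (b : K) ↔ b ∈ normFormSubgroup (a : K) := by
  suffices h : ∀ a b : Kˣ, a ∈ normFormSubgroup (b : K) → b ∈ normFormSubgroup (a : K) from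
    ⟨h a b, h b a⟩
  rintro a b ⟨u, v, h⟩
  have h2 : (2 : K) ≠ 0 := two_ne_zero
  rw [mem_normFormSubgroup]
  by_cases hv : v = 0
  · have hu : u ≠ 0 := by
      rintro rfl
      exact a.ne_zero (by rw [h, hv]; ring)
    refine ⟨(b + 1) / 2, (b - 1) / (2 * u), ?_⟩
    rw [h, hv]
    field_simp
    ring
  · refine ⟨u / v, 1 / v, ?_⟩
    field_simp
    linear_combination h

theorem exists_mem_normFormSubgroup_mul (p : ℕ) [Fact p.Prime] {K : Type*} [Field K]
    [Algebra ℚ_[p] K] [FiniteDimensional ℚ_[p] K] {d e : K} (hd : ¬ IsSquare d)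
    (he : ¬ IsSquare e) (hde : ¬ IsSquare (d * e)) (c : Kˣ) :
    ∃ y ∈ normFormSubgroup d, ∃ z ∈ normFormSubgroup (d * e), c = y * z := by
  have : CharZero K := charZero_of_injective_algebraMap (algebraMap ℚ_[p] K).injective
  have hd2 := index_normFormSubgroup p hd
  have hde2 := index_normFormSubgroup p hde
  have he2 := index_normFormSubgroup p he
  have hle : ¬ normFormSubgroup (d * e) ≤ normFormSubgroup d := by
    intro hle
    have heq : normFormSubgroup (d * e) = normFormSubgroup d := by
      have hrel := Subgroup.relIndex_mul_index hle
      rw [hd2, hde2] at hrel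
      exact le_antisymm hle (Subgroup.relIndex_eq_one.1 (by omega))
    have htop : normFormSubgroup e = ⊤ := by
      rw [eq_top_iff]
      rintro f -
      by_cases hf : IsSquare (f : K)
      · obtain ⟨r, hr⟩ := hf
        exact ⟨r, 0, by rw [hr]; ring⟩
      · have hd0 : d ≠ 0 := by rintro rfl; exact hd (.zero)
        have he0 : e ≠ 0 := by rintro rfl; exact he (.zero)
        have h1 : Units.mk0 d hd0 * Units.mk0 e he0 ∈ normFormSubgroup (f : K) ↔
            Units.mk0 d hd0 ∈ normFormSubgroup (f : K) := by
          rw [mem_normFormSubgroup_comm, mem_normFormSubgroup_comm (a := Units.mk0 d hd0),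
            Units.val_mul, Units.val_mk0, Units.val_mk0, heq]
        rw [Subgroup.mul_mem_iff_of_index_two (index_normFormSubgroup p hf)] at h1
        exact mem_normFormSubgroup_comm (b := Units.mk0 e he0).2 (by tauto)
    rw [htop, Subgroup.index_top] at he2
    omega
  obtain ⟨g, hg, hgd⟩ := Set.not_subset.1 hle
  by_cases hc : c ∈ normFormSubgroup d
  · exact ⟨c, hc, 1, one_mem _, by simp⟩
  · refine ⟨c * g⁻¹, ?_, g, hg, by simp⟩
    rw [Subgroup.mul_mem_iff_of_index_two hd2, inv_mem_iff]
    exact iff_of_false hc hgd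

section Quadratic

variable {F M : Type*} [Field F] [Field M] [Algebra F M] {a : F} {s : M}

theorem exists_algEquiv_quadraticAlgebra (ha : ¬ IsSquare a) (hs : s ^ 2 = algebraMap F M a)
    (hM : finrank F M = 2) :
    ∃ φ : QuadraticAlgebra F a 0 ≃ₐ[F] M,
      ∀ z, φ z = algebraMap F M z.re + algebraMap F M z.im * s := by
  have := fact_of_not_isSquare ha
  have : FiniteDimensional F M := .of_finrank_pos (by omega)
  let f : QuadraticAlgebra F a 0 →ₐ[F] M := QuadraticAlgebra.lift
    ⟨s, by rw [zero_smul, add_zero, ← sq, hs, Algebra.algebraMap_eq_smul_one]⟩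
  have hf : Function.Injective f := f.toRingHom.injective
  refine ⟨AlgEquiv.ofBijective f ⟨hf, (LinearMap.injective_iff_surjective_of_finrank_eq_finrank
    (f := f.toLinearMap) (by rw [hM, QuadraticAlgebra.finrank_eq_two])).1 hf⟩, fun z => ?_⟩
  rw [Algebra.algebraMap_eq_smul_one, Algebra.algebraMap_eq_smul_one, smul_mul_assoc, one_mul]
  rfl

theorem exists_eq_add_mul_of_finrank_eq_two (ha : ¬ IsSquare a)
    (hs : s ^ 2 = algebraMap F M a) (hM : finrank F M = 2) (m : M) :
    ∃ u v : F, m = algebraMap F M u + algebraMap F M v * s := by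
  obtain ⟨φ, hφ⟩ := exists_algEquiv_quadraticAlgebra ha hs hM
  exact ⟨_, _, by rw [← hφ, φ.apply_symm_apply m]⟩

theorem norm_add_mul_of_finrank_eq_two (ha : ¬ IsSquare a)
    (hs : s ^ 2 = algebraMap F M a) (hM : finrank F M = 2) (u v : F) :
    Algebra.norm F (algebraMap F M u + algebraMap F M v * s) = u ^ 2 - a * v ^ 2 := by
  obtain ⟨φ, hφ⟩ := exists_algEquiv_quadraticAlgebra ha hs hM
  have h := hφ ⟨u, v⟩
  rw [← h, Algebra.norm_eq_of_algEquiv φ]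
  refine (QuadraticAlgebra.det_toLinearMap_eq_norm _).trans ?_
  simp [QuadraticAlgebra.norm_def]
  ring

theorem mem_normGroup_iff_of_finrank_eq_two (ha : ¬ IsSquare a)
    (hs : s ^ 2 = algebraMap F M a) (hM : finrank F M = 2) (x : F) :
    x ∈ normGroup F M ↔ x ≠ 0 ∧ ∃ u v : F, x = u ^ 2 - a * v ^ 2 := by
  have : FiniteDimensional F M := .of_finrank_pos (by omega)
  constructor
  · rintro ⟨m, hm, rfl⟩
    refine ⟨Algebra.norm_ne_zero_iff.2 hm, ?_⟩
    obtain ⟨u, v, rfl⟩ := exists_eq_add_mul_of_finrank_eq_two ha hs hM m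
    exact ⟨u, v, norm_add_mul_of_finrank_eq_two ha hs hM u v⟩
  · rintro ⟨hx, u, v, rfl⟩
    have h := norm_add_mul_of_finrank_eq_two ha hs hM u v
    exact ⟨_, fun h0 => hx (by rw [← h, h0, Algebra.norm_zero]), h⟩

theorem not_isSquare_algebraMap_of_finrank_eq_two [NeZero (2 : F)] {d e : F} {s : M}
    (hd : ¬ IsSquare d) (he : ¬ IsSquare e) (hde : ¬ IsSquare (d * e))
    (hs : s ^ 2 = algebraMap F M e) (hM : finrank F M = 2) : ¬ IsSquare (algebraMap F M d) := by
  obtain ⟨φ, -⟩ := exists_algEquiv_quadraticAlgebra he hs hM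
  rintro ⟨r, hr⟩
  set z := φ.symm r
  have hz : z * z = algebraMap F _ d := by
    apply φ.injective
    rw [map_mul, φ.apply_symm_apply, φ.commutes, hr]
  have h1 := congrArg QuadraticAlgebra.re hz
  have h2 := congrArg QuadraticAlgebra.im hz
  simp at h1 h2
  have h3 : z.re * z.im = 0 := by
    have : (2 : F) * (z.re * z.im) = 0 := by linear_combination h2
    exact (mul_eq_zero.1 this).resolve_left two_ne_zero
  rcases mul_eq_zero.1 h3 with h | h
  · exact hde ⟨e * z.im, by rw [← h1, h]; ring⟩
  · exact hd ⟨z.re, by rw [← h1, h]; ring⟩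

end Quadratic

/-- Lemma 2.2 (main step): for non-isomorphic quadratic extensions `L = K(√d)` and
`E = K(√e)` of a `p`-adic field `K`, with compositum `LE` (a quadratic extension of `E`
containing `√d`), an element `t ∈ E*` is a norm from `LE` if and only if
`N_{E/K}(t)` is a norm from `L`. -/
theorem stmt_1 (p : ℕ) [Fact p.Prime]
    (K : Type*) [Field K] [Algebra ℚ_[p] K] [FiniteDimensional ℚ_[p] K]
    (d e : K) (hd0 : d ≠ 0) (he0 : e ≠ 0)
    (hd : ¬ IsSquare d) (he : ¬ IsSquare e) (hde : ¬ IsSquare (d * e))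
    (L : Type*) [Field L] [Algebra K L] (hL2 : finrank K L = 2)
    (hLd : ∃ s : L, s ^ 2 = algebraMap K L d)
    (E : Type*) [Field E] [Algebra K E] (hE2 : finrank K E = 2)
    (hEe : ∃ s : E, s ^ 2 = algebraMap K E e)
    (LE : Type*) [Field LE] [Algebra E LE] [Algebra K LE] [IsScalarTower K E LE]
    (hLE2 : finrank E LE = 2)
    (hLEd : ∃ s : LE, s ^ 2 = algebraMap K LE d) :
    ∀ t : E, t ≠ 0 →
      (t ∈ normGroup E LE ↔ Algebra.norm K t ∈ normGroup K L) := by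
  intro t ht
  have : CharZero K := charZero_of_injective_algebraMap (algebraMap ℚ_[p] K).injective
  have : FiniteDimensional K E := .of_finrank_pos (by omega)
  obtain ⟨sL, hsL⟩ := hLd
  obtain ⟨s, hs⟩ := hEe
  obtain ⟨sLE, hsLE⟩ := hLEd
  rw [IsScalarTower.algebraMap_apply K E LE] at hsLE
  have hdE := not_isSquare_algebraMap_of_finrank_eq_two hd he hde hs hE2
  rw [mem_normGroup_iff_of_finrank_eq_two hdE hsLE hLE2,
    mem_normGroup_iff_of_finrank_eq_two hd hsL hL2]
  refine and_congr (iff_of_true ht (Algebra.norm_ne_zero_iff.2 ht)) ⟨?_, ?_⟩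
  · rintro ⟨A, B, hAB⟩
    obtain ⟨a₁, a₂, rfl⟩ := exists_eq_add_mul_of_finrank_eq_two he hs hE2 A
    obtain ⟨b₁, b₂, rfl⟩ := exists_eq_add_mul_of_finrank_eq_two he hs hE2 B
    refine ⟨a₁ ^ 2 - e * a₂ ^ 2 + d * (b₁ ^ 2 - e * b₂ ^ 2), 2 * (a₁ * b₁ - e * a₂ * b₂), ?_⟩
    have ht' : t = algebraMap K E (a₁ ^ 2 + e * a₂ ^ 2 - d * (b₁ ^ 2 + e * b₂ ^ 2)) +
        algebraMap K E (2 * (a₁ * a₂ - d * b₁ * b₂)) * s := by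
      rw [hAB]
      simp only [map_add, map_sub, map_mul, map_pow, map_ofNat]
      rw [← hs]
      ring
    rw [ht', norm_add_mul_of_finrank_eq_two he hs hE2]
    ring
  · obtain ⟨x, y, rfl⟩ := exists_eq_add_mul_of_finrank_eq_two he hs hE2 t
    rw [norm_add_mul_of_finrank_eq_two he hs hE2]
    rintro ⟨u, v, huv⟩
    set t := algebraMap K E x + algebraMap K E y * s with ht_def
    have key : ∀ c : Kˣ, Units.map (algebraMap K E) c ∈ normFormSubgroup (algebraMap K E d) := by
      intro c
      obtain ⟨g, ⟨g₁, g₂, hg⟩, h, ⟨h₁, h₂, hh⟩, rfl⟩ :=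
        exists_mem_normFormSubgroup_mul p hd he hde c
      rw [map_mul]
      refine mul_mem ⟨algebraMap K E g₁, algebraMap K E g₂, ?_⟩
        ⟨algebraMap K E h₁, s * algebraMap K E h₂, ?_⟩
      · simp [hg]
      · simp [hh, mul_pow, hs, mul_assoc]
    have hmul : (t + algebraMap K E u) ^ 2 - algebraMap K E d * algebraMap K E v ^ 2 =
        t * algebraMap K E (2 * (x + u)) := by
      have h := congrArg (algebraMap K E) huv
      simp only [map_add, map_sub, map_mul, map_pow, map_ofNat] at h ⊢
      rw [← hs] at h
      linear_combination -h
    change Units.mk0 t ht ∈ normFormSubgroup (algebraMap K E d)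
    by_cases hc : 2 * (x + u) = 0
    · rw [hc, map_zero, mul_zero, sub_eq_zero] at hmul
      have hv : v = 0 := by
        by_contra hv
        have hv' : algebraMap K E v ≠ 0 := by simpa using hv
        refine hdE ⟨(t + algebraMap K E u) / algebraMap K E v, ?_⟩
        field_simp
        exact hmul.symm
      rw [hv, map_zero, zero_pow two_ne_zero, mul_zero, sq_eq_zero_iff] at hmul
      have htu : t = algebraMap K E (-u) := by rw [map_neg]; exact eq_neg_of_add_eq_zero_left hmul
      have hu : -u ≠ 0 := fun h0 => ht (by rw [htu, h0, map_zero])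
      convert key (Units.mk0 _ hu)
      exact Units.ext htu
    · rw [← mul_mem_cancel_right (key (Units.mk0 _ hc))]
      exact ⟨_, _, hmul.symm⟩
end

section
/- Let p be an odd prime, K a finite extension of ℚ_p with normalized discrete valuation v_K, and let F/K be a ramified quadratic extension. Let π_F be a uniformizer of F and set π_K = N_{F/K}(π_F), a uniformizer of K. Then an element x ∈ K* belongs to N_{F/K}(F*) if and only if x·π_K^{−v_K(x)} is a square in K*. -/
open Module

/-- `v` is the normalized discrete valuation of the `p`-adic field `K`. -/
def IsNormalizedValuation (p : ℕ) [Fact p.Prime] {K : Type*} [Field K] [Algebra ℚ_[p] K]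
    (v : K → ℤ) : Prop :=
  (∀ x y : K, x ≠ 0 → y ≠ 0 → v (x * y) = v x + v y) ∧
  (∀ x y : K, x ≠ 0 → y ≠ 0 → x + y ≠ 0 → min (v x) (v y) ≤ v (x + y)) ∧
  (∀ n : ℤ, ∃ x : K, x ≠ 0 ∧ v x = n) ∧
  0 < v (algebraMap ℚ_[p] K (p : ℚ_[p]))

section UltrametricRoots

variable {K : Type*} [NormedField K] [IsUltrametricDist K]

lemma norm_mul_sub_one_le {a b : K} {r : ℝ} (hr : r ≤ 1) (ha : ‖a - 1‖ ≤ r) (hb : ‖b - 1‖ ≤ r) :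
    ‖a * b - 1‖ ≤ r := by
  have hr0 : 0 ≤ r := (norm_nonneg _).trans ha
  have ha1 : ‖a‖ ≤ 1 := by
    have h := IsUltrametricDist.norm_add_le_max (a - 1) 1
    rw [sub_add_cancel, norm_one] at h
    exact h.trans (max_le (ha.trans hr) le_rfl)
  calc ‖a * b - 1‖ = ‖a * (b - 1) + (a - 1)‖ := by ring_nf
    _ ≤ max ‖a * (b - 1)‖ ‖a - 1‖ := IsUltrametricDist.norm_add_le_max _ _
    _ ≤ r := max_le (by rw [norm_mul]; nlinarith [norm_nonneg (b - 1)]) ha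

lemma norm_pow_sub_one_le {a : K} {r : ℝ} (hr : r ≤ 1) (ha : ‖a - 1‖ ≤ r) (n : ℕ) :
    ‖a ^ n - 1‖ ≤ r := by
  induction n with
  | zero => simpa using (norm_nonneg _).trans ha
  | succ k ih => rw [pow_succ]; exact norm_mul_sub_one_le hr ih ha

/-- Taking `n`-th powers is close to multiplication by `n`
on principal units. -/
lemma norm_pow_sub_pow_sub_mul_le {a b : K} {r : ℝ} (hr : r ≤ 1) (ha : ‖a - 1‖ ≤ r)
    (hb : ‖b - 1‖ ≤ r) (n : ℕ) : ‖a ^ n - b ^ n - n * (a - b)‖ ≤ r * ‖a - b‖ := by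
  have hsum : a ^ n - b ^ n - n * (a - b) =
      (∑ i ∈ Finset.range n, (a ^ i * b ^ (n - 1 - i) - 1)) * (a - b) := by
    rw [Finset.sum_sub_distrib, sub_mul, (Commute.all a b).geom_sum₂_mul]
    simp
  rw [hsum, norm_mul]
  gcongr
  exact IsUltrametricDist.norm_sum_le_of_forall_le_of_nonneg ((norm_nonneg _).trans ha)
    fun i _ ↦ norm_mul_sub_one_le hr (norm_pow_sub_one_le hr ha i) (norm_pow_sub_one_le hr hb _)

/-- Principal units of a complete ultrametric field are `n`-th powers whenever `‖n‖ = 1`. -/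
lemma exists_pow_eq_one_add [CompleteSpace K] {n : ℕ} (hn : ‖(n : K)‖ = 1) {z : K}
    (hz : ‖z‖ < 1) : ∃ y : K, y ^ n = 1 + z := by
  have hn0 : (n : K) ≠ 0 := norm_ne_zero_iff.mp (by simp [hn])
  set g : K → K := fun w ↦ w - ((1 + w) ^ n - 1 - z) / n with hg
  have hdiff : ∀ w w' : K, ‖w‖ ≤ ‖z‖ → ‖w'‖ ≤ ‖z‖ → ‖g w - g w'‖ ≤ ‖z‖ * ‖w - w'‖ := by
    intro w w' hw hw'
    have h := norm_pow_sub_pow_sub_mul_le hz.le (a := 1 + w) (b := 1 + w') (by simpa) (by simpa) n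
    have heq : g w - g w' = -(((1 + w) ^ n - (1 + w') ^ n - n * (1 + w - (1 + w'))) / n) := by
      simp only [hg]; field_simp; ring
    rw [heq, norm_neg, norm_div, hn, div_one]
    simpa using h
  have hmaps : Set.MapsTo g (Metric.closedBall 0 ‖z‖) (Metric.closedBall 0 ‖z‖) := by
    intro w hw
    rw [mem_closedBall_zero_iff] at hw ⊢
    have h0 : ‖g 0‖ ≤ ‖z‖ := by simp [hg, hn]
    have h := IsUltrametricDist.norm_add_le_max (g w - g 0) (g 0)
    rw [sub_add_cancel] at h
    refine h.trans (max_le ((hdiff w 0 hw (by simp)).trans ?_) h0)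
    rw [sub_zero]
    nlinarith [norm_nonneg z]
  have hcontr : ContractingWith ‖z‖₊ (hmaps.restrict g _ _) := by
    refine ⟨by exact_mod_cast hz, LipschitzWith.of_dist_le_mul ?_⟩
    rintro ⟨w, hw⟩ ⟨w', hw'⟩
    rw [mem_closedBall_zero_iff] at hw hw'
    simpa [Subtype.dist_eq, dist_eq_norm] using hdiff w w' hw hw'
  obtain ⟨w, -, hw, -⟩ := ContractingWith.exists_fixedPoint' Metric.isClosed_closedBall.isComplete
    hmaps hcontr (x := 0) (by simp) (edist_ne_top _ _)
  refine ⟨1 + w, ?_⟩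
  have h : ((1 + w) ^ n - 1 - z) / n = 0 := by
    have : w - ((1 + w) ^ n - 1 - z) / n = w := hw
    simpa using this
  rw [div_eq_zero_iff, or_iff_left hn0] at h
  linear_combination h

end UltrametricRoots

namespace IsNormalizedValuation

variable {p : ℕ} [Fact p.Prime] {K : Type*} [Field K] [Algebra ℚ_[p] K] {v : K → ℤ}

lemma map_mul (hv : IsNormalizedValuation p v) {x y : K} (hx : x ≠ 0) (hy : y ≠ 0) :
    v (x * y) = v x + v y :=
  hv.1 x y hx hy

lemma map_one (hv : IsNormalizedValuation p v) : v 1 = 0 := by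
  have h := hv.map_mul one_ne_zero one_ne_zero
  rw [mul_one] at h
  lia

lemma map_neg (hv : IsNormalizedValuation p v) {x : K} (hx : x ≠ 0) : v (-x) = v x := by
  have h1 : (-1 : K) ≠ 0 := by simp
  have h := hv.map_mul h1 h1
  rw [neg_one_mul, neg_neg, hv.map_one] at h
  have h' := hv.map_mul h1 hx
  rw [neg_one_mul] at h'
  lia

lemma map_pow (hv : IsNormalizedValuation p v) {x : K} (hx : x ≠ 0) (n : ℕ) :
    v (x ^ n) = n * v x := by
  induction n with
  | zero => simp [hv.map_one]
  | succ k ih => rw [pow_succ, hv.map_mul (pow_ne_zero k hx) hx, ih]; push_cast; ring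

lemma map_div (hv : IsNormalizedValuation p v) {x y : K} (hx : x ≠ 0) (hy : y ≠ 0) :
    v (x / y) = v x - v y := by
  have h := hv.map_mul (div_ne_zero hx hy) hy
  rw [div_mul_cancel₀ x hy] at h
  lia

lemma add_ne_zero (hv : IsNormalizedValuation p v) {x y : K} (hy : y ≠ 0)
    (h : v x ≠ v y) : x + y ≠ 0 := by
  intro h0
  rw [eq_neg_of_add_eq_zero_left h0, hv.map_neg hy] at h
  exact h rfl

lemma map_add_of_lt (hv : IsNormalizedValuation p v) {x y : K} (hx : x ≠ 0) (hy : y ≠ 0)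
    (h : v x < v y) : v (x + y) = v x := by
  have hxy := hv.add_ne_zero hy h.ne
  have h1 := hv.2.1 x y hx hy hxy
  have h2 := hv.2.1 (x + y) (-y) hxy (neg_ne_zero.mpr hy) (by simpa)
  rw [add_neg_cancel_right, hv.map_neg hy] at h2
  lia

lemma le_map_add (hv : IsNormalizedValuation p v) {x y : K} {n : ℤ} (hx : x ≠ 0 → n ≤ v x)
    (hy : y ≠ 0 → n ≤ v y) (hxy : x + y ≠ 0) : n ≤ v (x + y) := by
  rcases eq_or_ne x 0 with rfl | hx0
  · rw [zero_add] at hxy ⊢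
    exact hy hxy
  rcases eq_or_ne y 0 with rfl | hy0
  · rw [add_zero] at hxy ⊢
    exact hx hxy
  exact (le_min (hx hx0) (hy hy0)).trans (hv.2.1 x y hx0 hy0 hxy)

/-- Every element of norm at most `1` has nonnegative valuation: otherwise
`1 + p * x ^ n`, an `n`-th power for `n` prime to `p`, would have valuation prime to `n`. -/
lemma nonneg_of_norm_le_one {K : Type*} [NormedField K] [NormedAlgebra ℚ_[p] K]
    [IsUltrametricDist K] [CompleteSpace K] {v : K → ℤ} (hv : IsNormalizedValuation p v)
    {x : K} (hx0 : x ≠ 0) (hx : ‖x‖ ≤ 1) : 0 ≤ v x := by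
  by_contra! hneg
  set q : K := algebraMap ℚ_[p] K p with hq
  have hq0 : q ≠ 0 :=
    (map_ne_zero _).mpr (Nat.cast_ne_zero.mpr (Fact.out : p.Prime).ne_zero)
  have hvq : 0 < v q := hv.2.2.2
  obtain ⟨k, hk⟩ := Int.eq_ofNat_of_zero_le hvq.le
  have hkn : k < p * k + 1 := by nlinarith [(Fact.out : p.Prime).one_lt]
  set n := p * k + 1 with hn
  have hnorm : ‖(n : K)‖ = 1 := by
    rw [← map_natCast (algebraMap ℚ_[p] K), norm_algebraMap', Padic.norm_natCast_eq_one_iff]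
    simp [hn]
  have hz : ‖q * x ^ n‖ < 1 := by
    rw [norm_mul, norm_pow, hq, norm_algebraMap']
    exact mul_lt_one_of_nonneg_of_lt_one_left (norm_nonneg _) Padic.norm_p_lt_one
      (pow_le_one₀ (norm_nonneg _) hx)
  obtain ⟨y, hy⟩ := exists_pow_eq_one_add hnorm hz
  have hz0 : q * x ^ n ≠ 0 := mul_ne_zero hq0 (pow_ne_zero n hx0)
  have hvz : v (q * x ^ n) = k + n * v x := by
    rw [hv.map_mul hq0 (pow_ne_zero n hx0), hv.map_pow hx0, hk]
  have hkn' : (k : ℤ) < n := by exact_mod_cast hkn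
  have hlt : v (q * x ^ n) < v 1 := by rw [hvz, hv.map_one]; nlinarith
  have hvy := hv.map_add_of_lt hz0 one_ne_zero hlt
  have hy0 : y ≠ 0 := by
    rintro rfl
    rw [zero_pow (by lia), add_comm] at hy
    exact hv.add_ne_zero one_ne_zero hlt.ne hy.symm
  rw [add_comm, ← hy, hv.map_pow hy0, hvz] at hvy
  have hdvd : (n : ℤ) ∣ k := ⟨v y - v x, by linear_combination -hvy⟩
  have := Int.le_of_dvd (by lia) hdvd
  lia

/-- For odd `p`, principal units of a `p`-adic field are squares. -/
lemma isSquare_one_add [FiniteDimensional ℚ_[p] K] (hp : p ≠ 2)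
    (hv : IsNormalizedValuation p v) {z : K} (hz : z ≠ 0 → 0 < v z) : IsSquare (1 + z) := by
  rcases eq_or_ne z 0 with rfl | hz0
  · simp
  let : NormedField K := spectralNorm.normedField ℚ_[p] K
  let : NormedAlgebra ℚ_[p] K := spectralNorm.normedAlgebra ℚ_[p] K
  have : IsUltrametricDist K :=
    IsUltrametricDist.isUltrametricDist_of_isNonarchimedean_norm
      (isNonarchimedean_spectralNorm (K := ℚ_[p]) (L := K))
  have : CompleteSpace K := FiniteDimensional.complete ℚ_[p] K
  have hnorm : ‖z‖ < 1 := by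
    by_contra! h
    have h1 := hv.nonneg_of_norm_le_one (inv_ne_zero hz0)
      (by rw [norm_inv]; exact inv_le_one_of_one_le₀ h)
    have h2 := hv.map_mul hz0 (inv_ne_zero hz0)
    rw [mul_inv_cancel₀ hz0, hv.map_one] at h2
    have := hz hz0
    lia
  have h2 : ‖((2 : ℕ) : K)‖ = 1 := by
    rw [← map_natCast (algebraMap ℚ_[p] K), norm_algebraMap', Padic.norm_natCast_eq_one_iff]
    exact (Nat.coprime_primes Fact.out Nat.prime_two).mpr hp
  obtain ⟨y, hy⟩ := exists_pow_eq_one_add h2 hnorm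
  exact ⟨y, by rw [← hy, sq]⟩

/-- An element of the form `c ^ e * s ^ 2` with `v c = 1` has the same square class as
`c ^ (v x)`. -/
lemma isSquare_mul_zpow_neg (hv : IsNormalizedValuation p v) {c s : K} (hc : c ≠ 0)
    (hvc : v c = 1) (hs : s ≠ 0) (e : ℕ) :
    IsSquare (c ^ e * s ^ 2 * c ^ (-(v (c ^ e * s ^ 2)))) := by
  rw [hv.map_mul (pow_ne_zero _ hc) (pow_ne_zero _ hs), hv.map_pow hc, hv.map_pow hs, hvc]
  refine ⟨s * c ^ (-(v s)), ?_⟩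
  have h1 : c ^ (-((e : ℤ) * 1 + (2 : ℕ) * v s)) = (c ^ e)⁻¹ * (c ^ (-(v s)) * c ^ (-(v s))) := by
    rw [← zpow_natCast, ← zpow_neg, ← zpow_add₀ hc, ← zpow_add₀ hc]
    congr 1
    push_cast
    ring
  rw [h1]
  field_simp

/-- The polynomial `X ^ 2 - d * X - c` of a uniformizer of a ramified quadratic extension is
Eisenstein. -/
lemma coeff_of_sq_eq {K F : Type*} [Field K] [Field F] [Algebra ℚ_[p] F] [Algebra K F]
    {v : K → ℤ} {w : F → ℤ}
    (hw : IsNormalizedValuation p w) (hram : ∀ x : K, x ≠ 0 → w (algebraMap K F x) = 2 * v x)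
    {π : F} (hπ0 : π ≠ 0) (hπ : w π = 1) {c d : K}
    (hsq : π ^ 2 = algebraMap K F c + algebraMap K F d * π) :
    c ≠ 0 ∧ v c = 1 ∧ (d ≠ 0 → 1 ≤ v d) := by
  have hw2 : w (π ^ 2) = 2 := by rw [hw.map_pow hπ0, hπ]; rfl
  have hne : ∀ x : K, x ≠ 0 → algebraMap K F x ≠ 0 := fun x hx ↦ by simpa
  rcases eq_or_ne d 0 with rfl | hd
  · rw [map_zero, zero_mul, add_zero] at hsq
    have hc : c ≠ 0 := by
      rintro rfl
      exact pow_ne_zero 2 hπ0 (by simpa using hsq)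
    rw [hsq, hram c hc] at hw2
    exact ⟨hc, by lia, fun h ↦ absurd rfl h⟩
  have hd' := mul_ne_zero (hne d hd) hπ0
  have hwd : w (algebraMap K F d * π) = 2 * v d + 1 := by
    rw [hw.map_mul (hne d hd) hπ0, hram d hd, hπ]
  rcases eq_or_ne c 0 with rfl | hc
  · rw [map_zero, zero_add] at hsq
    rw [hsq] at hw2
    lia
  have hwc := hram c hc
  rcases lt_or_ge (w (algebraMap K F c)) (w (algebraMap K F d * π)) with h | h
  · rw [hsq, hw.map_add_of_lt (hne c hc) hd' h] at hw2
    exact ⟨hc, by lia, fun _ ↦ by lia⟩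
  · rw [hsq, add_comm, hw.map_add_of_lt hd' (hne c hc) (by lia)] at hw2
    lia

/-- The values of the norm form `a ^ 2 + a * b * d - b ^ 2 * c` of an Eisenstein polynomial are
squares up to powers of `-c`. -/
lemma exists_quadraticForm_eq [FiniteDimensional ℚ_[p] K] (hp : p ≠ 2)
    (hv : IsNormalizedValuation p v) {c d : K} (hc : c ≠ 0) (hvc : v c = 1)
    (hvd : d ≠ 0 → 1 ≤ v d) (a b : K) :
    ∃ (e : ℕ) (s : K), a ^ 2 + a * b * d - b ^ 2 * c = (-c) ^ e * s ^ 2 := by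
  by_cases hab : a ≠ 0 ∧ (b ≠ 0 → v a ≤ v b)
  · obtain ⟨ha, hab⟩ := hab
    obtain ⟨y, hy⟩ := hv.isSquare_one_add hp (z := b / a * d + (b / a) ^ 2 * -c) (by
      refine hv.le_map_add (fun h ↦ ?_) (fun h ↦ ?_) <;>
        obtain ⟨h1, h2⟩ := mul_ne_zero_iff.mp h
      · have hb : b ≠ 0 := (div_ne_zero_iff.mp h1).1
        rw [hv.map_mul h1 h2, hv.map_div hb ha]
        linarith [hab hb, hvd h2]
      · have hba : b / a ≠ 0 := fun h ↦ by simp [h] at h1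
        have hb : b ≠ 0 := (div_ne_zero_iff.mp hba).1
        rw [hv.map_mul h1 h2, hv.map_pow hba, hv.map_div hb ha, hv.map_neg hc, hvc]
        push_cast
        linarith [hab hb])
    refine ⟨0, a * y, ?_⟩
    rw [pow_zero, one_mul, mul_pow, sq y, ← hy]
    field_simp
    ring
  · rcases eq_or_ne b 0 with rfl | hb
    · exact ⟨0, a, by simp⟩
    have hlt : a ≠ 0 → v b < v a := by
      intro ha
      by_contra! h
      exact hab ⟨ha, fun _ ↦ h⟩
    obtain ⟨y, hy⟩ := hv.isSquare_one_add hp (z := a / b * (d / -c) + (a / b) ^ 2 / -c) (by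
      refine hv.le_map_add (fun h ↦ ?_) (fun h ↦ ?_)
      · obtain ⟨h1, h2⟩ := mul_ne_zero_iff.mp h
        have ha : a ≠ 0 := (div_ne_zero_iff.mp h1).1
        have hd : d ≠ 0 := (div_ne_zero_iff.mp h2).1
        rw [hv.map_mul h1 h2, hv.map_div ha hb, hv.map_div hd (neg_ne_zero.mpr hc),
          hv.map_neg hc, hvc]
        linarith [hlt ha, hvd hd]
      · have h1 := (div_ne_zero_iff.mp h).1
        have hab' : a / b ≠ 0 := fun h ↦ by simp [h] at h1
        have ha : a ≠ 0 := (div_ne_zero_iff.mp hab').1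
        rw [hv.map_div h1 (neg_ne_zero.mpr hc), hv.map_pow hab', hv.map_div ha hb,
          hv.map_neg hc, hvc]
        push_cast
        linarith [hlt ha])
    refine ⟨1, b * y, ?_⟩
    rw [pow_one, mul_pow, sq y, ← hy]
    field_simp
    ring

end IsNormalizedValuation

section Quadratic

variable {K F : Type*} [Field K] [Field F] [Algebra K F]

/-- A non-scalar element `π` of a quadratic extension generates it, and norms are given by the
associated binary quadratic form. -/
lemma exists_norm_add_mul_eq (hF2 : finrank K F = 2) {π : F}
    (hπ : ∀ a : K, algebraMap K F a ≠ π) :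
    ∃ c d : K, π ^ 2 = algebraMap K F c + algebraMap K F d * π ∧
      (∀ t : F, ∃ a b : K, t = algebraMap K F a + algebraMap K F b * π) ∧
      ∀ a b : K, Algebra.norm K (algebraMap K F a + algebraMap K F b * π) =
        a ^ 2 + a * b * d - b ^ 2 * c := by
  have hli : LinearIndependent K ![(1 : F), π] := by
    rw [LinearIndependent.pair_iff' one_ne_zero]
    intro a
    rw [← Algebra.algebraMap_eq_smul_one]
    exact hπ a
  let B : Basis (Fin 2) K F := basisOfLinearIndependentOfCardEqFinrank hli (by simp [hF2])
  have hB0 : B 0 = 1 := by simp [B]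
  have hB1 : B 1 = π := by simp [B]
  have hspan : ∀ t : F, t = algebraMap K F (B.repr t 0) + algebraMap K F (B.repr t 1) * π := by
    intro t
    conv_lhs => rw [← B.sum_repr t]
    simp [Fin.sum_univ_two, hB0, hB1, Algebra.smul_def]
  have hrepr : ∀ a b : K, B.repr (algebraMap K F a + algebraMap K F b * π) =
      Finsupp.single 0 a + Finsupp.single 1 b := by
    intro a b
    rw [← mul_one (algebraMap K F a), ← Algebra.smul_def, ← Algebra.smul_def, ← hB0, ← hB1]
    simp
  set c := B.repr (π ^ 2) 0
  set d := B.repr (π ^ 2) 1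
  have hsq : π ^ 2 = algebraMap K F c + algebraMap K F d * π := hspan _
  refine ⟨c, d, hsq, fun t ↦ ⟨_, _, hspan t⟩, fun a b ↦ ?_⟩
  have hmul : (algebraMap K F a + algebraMap K F b * π) * π =
      algebraMap K F (b * c) + algebraMap K F (a + b * d) * π := by
    simp only [map_mul, map_add]
    linear_combination (algebraMap K F b) * hsq
  rw [Algebra.norm_eq_matrix_det B, Matrix.det_fin_two]
  simp only [Algebra.leftMulMatrix_eq_repr_mul, hB0, hB1, mul_one, hmul, hrepr]
  simp
  ring

lemma norm_zpow_of_ne_zero {t : F} (ht : t ≠ 0) (n : ℤ) :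
    Algebra.norm K (t ^ n) = Algebra.norm K t ^ n := by
  have h := congrArg Units.val (map_zpow (Units.map (Algebra.norm K)) (Units.mk0 t ht) n)
  simpa only [Units.coe_map, Units.val_zpow_eq_zpow_val, Units.val_mk0] using! h

end Quadratic

/-- Lemma 3.1(ii): let `p` be an odd prime, `F/K` a ramified quadratic extension of `p`-adic
fields, `π_F` a uniformizer of `F` and `π_K = N_{F/K}(π_F)`. Then `x ∈ K*` is a norm from `F`
if and only if `x · π_K^{-v_K(x)}` is a square. -/
theorem stmt_4 (p : ℕ) [Fact p.Prime] (hp : p ≠ 2)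
    (K : Type*) [Field K] [Algebra ℚ_[p] K] [FiniteDimensional ℚ_[p] K]
    (vK : K → ℤ) (hvK : IsNormalizedValuation p vK)
    (F : Type*) [Field F] [Algebra K F] [Algebra ℚ_[p] F] [IsScalarTower ℚ_[p] K F]
    (hF2 : finrank K F = 2)
    (vF : F → ℤ) (hvF : IsNormalizedValuation p vF)
    (hram : ∀ x : K, x ≠ 0 → vF (algebraMap K F x) = 2 * vK x)
    (πF : F) (hπF0 : πF ≠ 0) (hπF : vF πF = 1)
    (πK : K) (hπK : Algebra.norm K πF = πK) :
    ∀ x : K, x ≠ 0 → (x ∈ normGroup K F ↔ IsSquare (x * πK ^ (-(vK x)))) := by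
  have hπ : ∀ a : K, algebraMap K F a ≠ πF := by
    rintro a rfl
    have := hram a (by rintro rfl; simp at hπF0)
    lia
  obtain ⟨c, d, hsq, hspan, hnorm⟩ := exists_norm_add_mul_eq hF2 hπ
  obtain ⟨hc0, hvc, hvd⟩ := hvF.coeff_of_sq_eq hram hπF0 hπF hsq
  have hπKc : πK = -c := by
    have h := hnorm 0 1
    simp only [map_zero, map_one, zero_add, one_mul, hπK] at h
    linear_combination h
  have hπK0 : πK ≠ 0 := by rw [hπKc]; exact neg_ne_zero.mpr hc0
  have hvπK : vK πK = 1 := by rw [hπKc, hvK.map_neg hc0, hvc]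
  intro x hx
  constructor
  · rintro ⟨t, ht, rfl⟩
    obtain ⟨a, b, rfl⟩ := hspan t
    rw [hnorm] at hx ⊢
    obtain ⟨e, s, hs⟩ := hvK.exists_quadraticForm_eq hp hc0 hvc hvd a b
    rw [hs, ← hπKc] at hx ⊢
    refine hvK.isSquare_mul_zpow_neg hπK0 hvπK ?_ e
    rintro rfl
    simp at hx
  · rintro ⟨s, hs⟩
    have hxs : x = s ^ 2 * πK ^ vK x := by
      rw [sq, ← hs, zpow_neg, mul_assoc, inv_mul_cancel₀ (zpow_ne_zero _ hπK0), mul_one]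
    have hs0 : s ≠ 0 := by
      rintro rfl
      simp [hx, hπK0, zpow_ne_zero] at hs
    refine ⟨algebraMap K F s * πF ^ vK x, mul_ne_zero (by simpa) (zpow_ne_zero _ hπF0), ?_⟩
    rw [map_mul, norm_zpow_of_ne_zero hπF0, Algebra.norm_algebraMap, hF2, hπK, ← hxs]
end

section
/- Let p be an odd prime, K a finite extension of ℚ_p, and let d, e ∈ K* be non-squares with de ∉ (K*)² (so L = K(√d) and E = K(√e) are non-isomorphic quadratic extensions of K). Then either −e ∉ N_{L/K}(L*), or there exists x ∈ K* with x ∉ N_{L/K}(L*) and x² − e ∉ N_{L/K}(L*). -/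
open Module

open IsLocalRing

section HenselianDVR

variable {R : Type*} [CommRing R]

theorem isSquare_of_isSquare_residue [HenselianLocalRing R] (h2 : IsUnit (2 : R)) {u : R}
    (hu : IsUnit u) (h : IsSquare (residue R u)) : IsSquare u := by
  obtain ⟨r, hr⟩ := h
  obtain ⟨a, rfl⟩ := residue_surjective r
  have hmem : a * a - u ∈ maximalIdeal R := by
    rw [← residue_eq_zero_iff, map_sub, map_mul, hr, sub_self]
  have ha : IsUnit a := by
    rw [← residue_ne_zero_iff_isUnit] at hu ⊢
    intro h
    simp [hr, h] at hu
  obtain ⟨b, hb, -⟩ := HenselianLocalRing.is_henselian (Polynomial.X ^ 2 - Polynomial.C u)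
    (Polynomial.monic_X_pow_sub_C u two_ne_zero) a (by simpa [sq] using hmem)
    (by simpa [one_add_one_eq_two] using h2.mul ha)
  refine ⟨b, ?_⟩
  simp only [Polynomial.IsRoot, Polynomial.eval_sub, Polynomial.eval_pow, Polynomial.eval_X,
    Polynomial.eval_C] at hb
  linear_combination -hb

theorem exists_sq_add_sq_eq_neg_one [HenselianLocalRing R] [Finite (ResidueField R)]
    (h2 : IsUnit (2 : R)) : ∃ y z : R, y ^ 2 + z ^ 2 = -1 := by
  obtain ⟨q, hq⟩ := CharP.exists (ResidueField R)
  have : NeZero q := ⟨CharP.char_ne_zero_of_finite (ResidueField R) q⟩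
  obtain ⟨a, b, hab⟩ := CharP.sq_add_sq (ResidueField R) q (-1)
  wlog ha : (a : ResidueField R) ≠ 0 generalizing a b
  · refine this b a (by rw [add_comm, hab]) fun hb ↦ ?_
    simp [hb, not_not.1 ha] at hab
  have hr : residue R (-1 - (b : R) ^ 2) = (a : ResidueField R) ^ 2 := by
    push_cast at hab
    simp [← hab]
  obtain ⟨y, hy⟩ := isSquare_of_isSquare_residue h2 (u := -1 - (b : R) ^ 2)
    (by rw [← residue_ne_zero_iff_isUnit, hr]; exact pow_ne_zero _ ha)
    (by rw [hr]; exact IsSquare.sq _)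
  exact ⟨y, b, by linear_combination -hy⟩

theorem FiniteField.isSquare_mul_of_not_isSquare {F : Type*} [Field F] [Finite F]
    {a b : F} (ha : ¬ IsSquare a) (hb : ¬ IsSquare b) : IsSquare (a * b) := by
  classical
  have := Fintype.ofFinite F
  have hF : ringChar F ≠ 2 := fun h ↦ ha (FiniteField.isSquare_of_char_two h a)
  have hab : a * b ≠ 0 := mul_ne_zero (by rintro rfl; simp at ha) (by rintro rfl; simp at hb)
  rw [← quadraticChar_one_iff_isSquare hab, map_mul,
    quadraticChar_neg_one_iff_not_isSquare.2 ha, quadraticChar_neg_one_iff_not_isSquare.2 hb]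
  norm_num

theorem exists_isUnit_not_isSquare_residue [IsLocalRing R] [Finite (ResidueField R)]
    (h2 : IsUnit (2 : R)) : ∃ g : R, IsUnit g ∧ ¬ IsSquare (residue R g) := by
  obtain ⟨a, ha⟩ := FiniteField.exists_nonsquare (F := ResidueField R) (fun h ↦ by
    rw [← residue_ne_zero_iff_isUnit, map_ofNat] at h2
    have := ringChar.Nat.cast_ringChar (R := ResidueField R)
    rw [h] at this
    exact h2 (by exact_mod_cast this))
  obtain ⟨g, rfl⟩ := residue_surjective a
  refine ⟨g, ?_, ha⟩
  rw [← residue_ne_zero_iff_isUnit]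
  intro h
  simp [h] at ha

theorem isSquare_or_isSquare_mul_of_isUnit [HenselianLocalRing R] [Finite (ResidueField R)]
    (h2 : IsUnit (2 : R)) {g u : R} (hg : IsUnit g) (hg' : ¬ IsSquare (residue R g))
    (hu : IsUnit u) : IsSquare u ∨ IsSquare (g * u) := by
  by_cases h : IsSquare (residue R u)
  · exact .inl (isSquare_of_isSquare_residue h2 hu h)
  · refine .inr (isSquare_of_isSquare_residue h2 (hg.mul hu) ?_)
    rw [map_mul]
    exact FiniteField.isSquare_mul_of_not_isSquare hg' h

variable [IsDomain R] [IsDiscreteValuationRing R]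

theorem dvd_of_dvd_sq_sub_mul_sq {ϖ g a b : R} (hϖ : Irreducible ϖ)
    (hg : ¬ IsSquare (residue R g)) (h : ϖ ∣ a ^ 2 - g * b ^ 2) : ϖ ∣ a ∧ ϖ ∣ b := by
  have key (x : R) : ϖ ∣ x ↔ residue R x = 0 := by
    rw [residue_eq_zero_iff, hϖ.maximalIdeal_eq, Ideal.mem_span_singleton]
  simp only [key, map_sub, map_mul, map_pow] at h ⊢
  by_cases hb : residue R b = 0
  · simpa [hb] using h
  · refine absurd ⟨residue R a / residue R b, ?_⟩ hg
    field_simp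
    linear_combination -h

theorem pow_dvd_of_sq_sub_mul_sq_eq {ϖ g : R} (hϖ : Irreducible ϖ)
    (hg : ¬ IsSquare (residue R g)) (n : ℕ) {a b c : R} (h : a ^ 2 - g * b ^ 2 = ϖ * c ^ 2) :
    ϖ ^ n ∣ b ∧ ϖ ^ n ∣ c := by
  induction n generalizing a b c with
  | zero => simp
  | succ n ih =>
    obtain ⟨⟨a, rfl⟩, b, rfl⟩ := dvd_of_dvd_sq_sub_mul_sq hϖ hg (h ▸ dvd_mul_right _ _)
    have h' : ϖ * (a ^ 2 - g * b ^ 2) = c ^ 2 :=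
      mul_left_cancel₀ hϖ.ne_zero (by linear_combination h)
    obtain ⟨c, rfl⟩ := hϖ.prime.dvd_of_dvd_pow (h' ▸ dvd_mul_right _ _)
    obtain ⟨hb, hc⟩ := ih (a := a) (b := b) (c := c)
      (mul_left_cancel₀ hϖ.ne_zero (by linear_combination h'))
    rw [pow_succ']
    exact ⟨mul_dvd_mul_left _ hb, mul_dvd_mul_left _ hc⟩

theorem eq_zero_of_sq_sub_mul_sq_eq {ϖ g : R} (hϖ : Irreducible ϖ)
    (hg : ¬ IsSquare (residue R g)) {a b c : R} (h : a ^ 2 - g * b ^ 2 = ϖ * c ^ 2) :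
    b = 0 ∧ c = 0 := by
  have key (x : R) (hx : ∀ n, ϖ ^ n ∣ x) : x = 0 := by
    by_contra h0
    obtain ⟨n, hn⟩ := IsDiscreteValuationRing.associated_pow_irreducible h0 hϖ
    have := (pow_dvd_pow_iff hϖ.ne_zero hϖ.not_isUnit).1 ((hx (n + 1)).trans hn.dvd)
    omega
  exact ⟨key b fun n ↦ (pow_dvd_of_sq_sub_mul_sq_eq hϖ hg n h).1,
    key c fun n ↦ (pow_dvd_of_sq_sub_mul_sq_eq hϖ hg n h).2⟩

variable {K : Type*} [Field K] [Algebra R K] [IsFractionRing R K]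

/-- The form `a² - g b² - ϖ c²` is anisotropic when `g` is a non-square in the residue field. -/
theorem eq_zero_of_sq_sub_mul_sq_eq_of_isFractionRing {ϖ g : R} (hϖ : Irreducible ϖ)
    (hg : ¬ IsSquare (residue R g)) {a b c : K}
    (h : a ^ 2 - algebraMap R K g * b ^ 2 = algebraMap R K ϖ * c ^ 2) : b = 0 ∧ c = 0 := by
  classical
  obtain ⟨m, hm⟩ := IsLocalization.exist_integer_multiples_of_finset (nonZeroDivisors R) {a, b, c}
  have hm0 : algebraMap R K m ≠ 0 := IsFractionRing.to_map_ne_zero_of_mem_nonZeroDivisors m.2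
  obtain ⟨a', ha⟩ := hm a (by simp)
  obtain ⟨b', hb⟩ := hm b (by simp)
  obtain ⟨c', hc⟩ := hm c (by simp)
  rw [Algebra.smul_def] at ha hb hc
  have := eq_zero_of_sq_sub_mul_sq_eq hϖ hg (a := a') (b := b') (c := c')
    (IsFractionRing.injective R K (by
      simp only [map_sub, map_mul, map_pow, ha, hb, hc]
      linear_combination (algebraMap R K m) ^ 2 * h))
  rw [this.1, map_zero, eq_comm, mul_eq_zero] at hb
  rw [this.2, map_zero, eq_comm, mul_eq_zero] at hc
  exact ⟨hb.resolve_left hm0, hc.resolve_left hm0⟩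

variable [Finite (ResidueField R)]

/-- The fraction field has at most four square classes, those of `1`, `g`, `ϖ` and `ϖ * g`. -/
theorem isSquare_or_isSquare_algebraMap_mul [HenselianLocalRing R]
    (h2 : IsUnit (2 : R)) {ϖ g : R} (hϖ : Irreducible ϖ) (hg : IsUnit g)
    (hg' : ¬ IsSquare (residue R g)) {x : K} (hx : x ≠ 0) :
    IsSquare x ∨ IsSquare (algebraMap R K g * x) ∨ IsSquare (algebraMap R K ϖ * x) ∨
      IsSquare (algebraMap R K (ϖ * g) * x) := by
  obtain ⟨a, b, hb, rfl⟩ := IsFractionRing.div_surjective R x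
  have hb0 : algebraMap R K b ≠ 0 := IsFractionRing.to_map_ne_zero_of_mem_nonZeroDivisors hb
  have ha0 : a ≠ 0 := by rintro rfl; simp at hx
  obtain ⟨n, u, hn⟩ := IsDiscreteValuationRing.eq_unit_mul_pow_irreducible
    (mul_ne_zero ha0 (nonZeroDivisors.ne_zero hb)) hϖ
  have key (w : R) (hw : IsSquare (w * (a * b))) :
      IsSquare (algebraMap R K w * (algebraMap R K a / algebraMap R K b)) := by
    have : algebraMap R K w * (algebraMap R K a / algebraMap R K b) =
        algebraMap R K (w * (a * b)) * (algebraMap R K b)⁻¹ ^ 2 := by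
      rw [map_mul, map_mul]
      field_simp
    rw [this]
    exact (hw.map (algebraMap R K)).mul (.sq _)
  have key1 := key 1
  rw [map_one, one_mul, one_mul] at key1
  rcases isSquare_or_isSquare_mul_of_isUnit h2 hg hg' u.isUnit with ⟨r, hr⟩ | ⟨r, hr⟩ <;>
    rcases n.even_or_odd' with ⟨k, rfl | rfl⟩
  · exact .inl (key1 ⟨r * ϖ ^ k, by rw [hn, hr]; ring⟩)
  · exact .inr (.inr (.inl (key _ ⟨r * ϖ ^ (k + 1), by rw [hn, hr]; ring⟩)))
  · exact .inr (.inl (key _ ⟨r * ϖ ^ k, by rw [hn]; linear_combination (ϖ ^ k) ^ 2 * hr⟩))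
  · exact .inr (.inr (.inr (key _ ⟨r * ϖ ^ (k + 1), by
      rw [hn]; linear_combination (ϖ ^ (k + 1)) ^ 2 * hr⟩)))

end HenselianDVR

section Field

variable {K : Type*} [Field K]

/-- `x` is represented by the norm form `a² - d b²`. -/
def IsNormForm (d x : K) : Prop := ∃ a b : K, x = a ^ 2 - d * b ^ 2

namespace IsNormForm

variable {d x y : K}

theorem mul (hx : IsNormForm d x) (hy : IsNormForm d y) : IsNormForm d (x * y) := by
  obtain ⟨a, b, rfl⟩ := hx
  obtain ⟨a', b', rfl⟩ := hy
  exact ⟨a * a' + d * b * b', a * b' + b * a', by ring⟩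

theorem of_isSquare (hx : IsSquare x) : IsNormForm d x := by
  obtain ⟨r, rfl⟩ := hx
  exact ⟨r, 0, by ring⟩

theorem of_isSquare_mul (hy0 : y ≠ 0) (hy : IsNormForm d y) (h : IsSquare (x * y)) :
    IsNormForm d x := by
  have : x = x * y * (y⁻¹ * y⁻¹) * y := by field_simp
  rw [this]
  exact ((of_isSquare h).mul (of_isSquare ⟨y⁻¹, rfl⟩)).mul hy

theorem neg_self (d : K) : IsNormForm d (-d) := ⟨0, 1, by ring⟩

end IsNormForm

/-- Over a local field of odd residue characteristic, the norm form of a quadratic extension is not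
universal. -/
theorem exists_not_isNormForm {R : Type*} [CommRing R] [IsDomain R] [IsDiscreteValuationRing R]
    [HenselianLocalRing R] [Finite (ResidueField R)] [Algebra R K] [IsFractionRing R K]
    (h2 : IsUnit (2 : R)) {d : K} (hd0 : d ≠ 0) (hd : ¬ IsSquare d) :
    ∃ x : K, x ≠ 0 ∧ ¬ IsNormForm d x := by
  obtain ⟨g, hgu, hg⟩ := exists_isUnit_not_isSquare_residue h2
  obtain ⟨ϖ, hϖ⟩ := IsDiscreteValuationRing.exists_irreducible R
  have inj := IsFractionRing.injective R K
  have hg0 : algebraMap R K g ≠ 0 := (map_ne_zero_iff _ inj).2 hgu.ne_zero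
  have ramified (π : R) (hπ : Irreducible π) (h : IsSquare (algebraMap R K π * d)) :
      ¬ IsNormForm d (algebraMap R K g) := by
    obtain ⟨r, hr⟩ := h
    rintro ⟨a, b, hab⟩
    have hπ0 : algebraMap R K π ≠ 0 := (map_ne_zero_iff _ inj).2 hπ.ne_zero
    refine one_ne_zero (eq_zero_of_sq_sub_mul_sq_eq_of_isFractionRing hπ hg
      (a := a) (b := 1) (c := r * b / algebraMap R K π) ?_).1
    field_simp
    linear_combination (-algebraMap R K π) * hab + b ^ 2 * hr
  rcases isSquare_or_isSquare_algebraMap_mul h2 hϖ hgu hg hd0 with h | ⟨r, hr⟩ | h | h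
  · exact absurd h hd
  · refine ⟨algebraMap R K ϖ, (map_ne_zero_iff _ inj).2 hϖ.ne_zero, ?_⟩
    rintro ⟨a, b, hab⟩
    refine one_ne_zero (eq_zero_of_sq_sub_mul_sq_eq_of_isFractionRing hϖ hg
      (a := a) (b := r * b / algebraMap R K g) (c := 1) ?_).2
    field_simp
    linear_combination (-algebraMap R K g) * hab + b ^ 2 * hr
  · exact ⟨_, hg0, ramified ϖ hϖ h⟩
  · exact ⟨_, hg0, ramified (ϖ * g) ((irreducible_mul_isUnit hgu).2 hϖ) h⟩

/-- If `K` has at most four square classes, then two independent non-squares generate them all. -/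
theorem isSquare_or_isSquare_mul_of_four_classes (c : Fin 4 → K) (hc0 : ∀ i, c i ≠ 0)
    (hc : ∀ x : K, x ≠ 0 → ∃ i, IsSquare (c i * x))
    {d e : K} (hd0 : d ≠ 0) (he0 : e ≠ 0) (hd : ¬ IsSquare d) (he : ¬ IsSquare e)
    (hde : ¬ IsSquare (d * e)) {x : K} (hx : x ≠ 0) :
    IsSquare x ∨ IsSquare (x * d) ∨ IsSquare (x * e) ∨ IsSquare (x * (d * e)) := by
  have same {i : Fin 4} {x y : K} (hx : IsSquare (c i * x)) (hy : IsSquare (c i * y)) :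
      IsSquare (x * y) := by
    have : x * y = c i * x * (c i * y) * ((c i)⁻¹ * (c i)⁻¹) := by
      have := hc0 i
      field_simp
    rw [this]
    exact (hx.mul hy).mul ⟨_, rfl⟩
  have cancel {x y : K} (hx0 : x ≠ 0) (h : IsSquare (x * (x * y))) : IsSquare y := by
    have : y = x * (x * y) * (x⁻¹ * x⁻¹) := by field_simp
    rw [this]
    exact h.mul ⟨_, rfl⟩
  let v : Fin 4 → K := ![1, d, e, d * e]
  have hv0 (k : Fin 4) : v k ≠ 0 := by
    fin_cases k <;> simp [v, hd0, he0]
  choose f hf using fun k ↦ hc (v k) (hv0 k)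
  have hv {k l : Fin 4} (hkl : k < l) : ¬ IsSquare (v k * v l) := by
    fin_cases k <;> fin_cases l <;> first | exact absurd hkl (by decide) | skip
    · simpa [v] using hd
    · simpa [v] using he
    · simpa [v] using hde
    · simpa [v] using hde
    · simpa [v] using fun h ↦ he (cancel hd0 h)
    · simpa [v, mul_comm d e] using fun h ↦ hd (cancel he0 h)
  have hinj : Function.Injective f := by
    intro k l hkl
    by_contra hne
    rcases lt_or_gt_of_ne hne with h | h
    · exact hv h (same (hf k) (hkl ▸ hf l))
    · exact hv h (same (hf l) (hkl ▸ hf k))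
  obtain ⟨i, hi⟩ := hc x hx
  obtain ⟨k, rfl⟩ := Finite.surjective_of_injective hinj i
  have := same hi (hf k)
  fin_cases k <;> simp [v] at this <;> tauto

theorem not_isNormForm_neg_or_exists {d e : K} (hd0 : d ≠ 0) (he0 : e ≠ 0)
    (hcls : ∀ x : K, x ≠ 0 →
      IsSquare x ∨ IsSquare (x * d) ∨ IsSquare (x * e) ∨ IsSquare (x * (d * e)))
    (hnon : ∃ x : K, x ≠ 0 ∧ ¬ IsNormForm d x) (hsum : ∃ y z : K, y ^ 2 + z ^ 2 = -1) :
    ¬ IsNormForm d (-e) ∨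
      ∃ x : K, x ≠ 0 ∧ ¬ IsNormForm d x ∧ ¬ IsNormForm d (x ^ 2 - e) := by
  rw [or_iff_not_imp_left, not_not]
  intro hne
  have hneg : ¬ IsNormForm d (-1) := by
    intro h1
    obtain ⟨x, hx0, hx⟩ := hnon
    have hd : IsNormForm d d := by simpa using h1.mul (.neg_self d)
    have he : IsNormForm d e := by simpa using h1.mul hne
    rcases hcls x hx0 with h | h | h | h
    · exact hx (.of_isSquare h)
    · exact hx (.of_isSquare_mul hd0 hd h)
    · exact hx (.of_isSquare_mul he0 he h)
    · exact hx (.of_isSquare_mul (mul_ne_zero hd0 he0) (hd.mul he) h)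
  obtain ⟨y, z, hyz⟩ := hsum
  have hnsq : ∀ w : K, w ^ 2 ≠ -1 := fun w hw ↦ hneg (hw ▸ .of_isSquare (.sq w))
  have hy0 : y ≠ 0 := by
    rintro rfl
    exact hnsq z (by simpa using hyz)
  have hz0 : z ≠ 0 := by
    rintro rfl
    exact hnsq y (by simpa using hyz)
  rcases hcls (-1) (neg_ne_zero.2 one_ne_zero) with h | ⟨r, hr⟩ | ⟨r, hr⟩ | h
  · exact absurd (.of_isSquare h) hneg
  · have hr0 : r ≠ 0 := by
      rintro rfl
      simp [hd0] at hr
    refine absurd ⟨y, z / r, ?_⟩ hneg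
    field_simp
    linear_combination (-r ^ 2) * hyz - z ^ 2 * hr
  · have hr0 : r ≠ 0 := by
      rintro rfl
      simp [he0] at hr
    have hw {w : K} (hw0 : w ≠ 0) (h : IsNormForm d w) : ¬ IsNormForm d (-w) := fun h' ↦
      hneg (.of_isSquare_mul (mul_ne_zero hw0 (neg_ne_zero.2 hw0)) (h.mul h') ⟨w, by ring⟩)
    have hsq (w : K) (hw2 : w ^ 2 = (r * y) ^ 2) : ¬ IsNormForm d (w ^ 2 - e) := by
      have : w ^ 2 - e = -(r * z) ^ 2 := by
        rw [hw2]
        linear_combination r ^ 2 * hyz + hr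
      rw [this]
      exact hw (pow_ne_zero 2 (mul_ne_zero hr0 hz0)) (.of_isSquare (.sq _))
    have hry0 : r * y ≠ 0 := mul_ne_zero hr0 hy0
    by_cases h : IsNormForm d (r * y)
    · exact ⟨-(r * y), neg_ne_zero.2 hry0, hw hry0 h, hsq _ (neg_sq _)⟩
    · exact ⟨r * y, hry0, h, hsq _ rfl⟩
  · refine absurd (.of_isSquare_mul (mul_ne_zero hd0 he0) ?_ h) hneg
    simpa using (IsNormForm.neg_self d).mul hne

theorem mem_normGroup_iff {L : Type*} [Field L] [Algebra K L] (hL2 : finrank K L = 2)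
    {d : K} (hd : ¬ IsSquare d) {s : L} (hs : s ^ 2 = algebraMap K L d) {x : K} :
    x ∈ normGroup K L ↔ x ≠ 0 ∧ IsNormForm d x := by
  have hli : LinearIndependent K ![1, s] := by
    refine (LinearIndependent.pair_iff' one_ne_zero).2 fun a ha ↦ hd ⟨a, ?_⟩
    apply (algebraMap K L).injective
    rw [← hs, ← ha, Algebra.smul_def, map_mul]
    ring
  let B := basisOfLinearIndependentOfCardEqFinrank hli (by simp [hL2])
  have hB0 : B 0 = 1 := by simp [B]
  have hB1 : B 1 = s := by simp [B]
  have hrepr (a b : K) : B.repr (a • 1 + b • s) = Finsupp.single 0 a + Finsupp.single 1 b := by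
    rw [← hB0, ← hB1]
    simp
  have hnorm (a b : K) : Algebra.norm K (a • 1 + b • s : L) = a ^ 2 - d * b ^ 2 := by
    have h0 : (a • 1 + b • s) * B 0 = a • 1 + b • s := by rw [hB0, mul_one]
    have h1 : (a • 1 + b • s) * B 1 = (d * b) • 1 + a • s := by
      rw [hB1]
      simp only [Algebra.smul_def, map_mul, ← hs]
      ring
    rw [Algebra.norm_eq_matrix_det B, Matrix.det_fin_two]
    simp only [Algebra.leftMulMatrix_eq_repr_mul, h0, h1, hrepr]
    simp
    ring
  have : FiniteDimensional K L := .of_finrank_pos (by omega)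
  constructor
  · rintro ⟨t, ht0, rfl⟩
    refine ⟨Algebra.norm_ne_zero_iff.2 ht0, B.repr t 0, B.repr t 1, ?_⟩
    rw [← hnorm, ← hB0, ← hB1, ← Fin.sum_univ_two (fun i ↦ B.repr t i • B i), B.sum_repr]
  · rintro ⟨hx, a, b, hab⟩
    refine ⟨a • 1 + b • s, fun h ↦ hx ?_, by rw [hnorm, hab]⟩
    rw [hab, ← hnorm, h, Algebra.norm_zero]

end Field

/-- For odd `p`, a finite extension of `ℚ_[p]` is the fraction field of a Henselian discrete
valuation ring with finite residue field in which `2` is invertible. -/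
theorem Padic.exists_henselian_valuationSubring (p : ℕ) [Fact p.Prime] (hp : p ≠ 2)
    (K : Type*) [Field K] [Algebra ℚ_[p] K] [FiniteDimensional ℚ_[p] K] :
    ∃ R : Subring K, IsFractionRing R K ∧ ∃ (_ : IsDiscreteValuationRing R), HenselianLocalRing R ∧
      Finite (IsLocalRing.ResidueField R) ∧ IsUnit (2 : R) := by
  let : NontriviallyNormedField K := spectralNorm.nontriviallyNormedField ℚ_[p] K
  let : NormedAlgebra ℚ_[p] K := spectralNorm.normedAlgebra ℚ_[p] K
  have : IsUltrametricDist K := IsUltrametricDist.isUltrametricDist_of_isNonarchimedean_norm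
    isNonarchimedean_spectralNorm
  have : ProperSpace K := FiniteDimensional.proper ℚ_[p] K
  let : Valued K NNReal := NormedField.toValued
  let : ValuativeRel K := ValuativeRel.ofValuation (Valued.v (R := K) (Γ₀ := NNReal))
  have : (Valued.v (R := K) (Γ₀ := NNReal)).Compatible := Valuation.Compatible.ofValuation _
  have : IsValuativeTopology K :=
    IsValuativeTopology.of_mem_nhds_iff_vle (Valued.v (R := K) (Γ₀ := NNReal)) Valued.mem_nhds
  have : ValuativeRel.IsNontrivial K :=
    (ValuativeRel.isNontrivial_iff_isNontrivial (Valued.v (R := K) (Γ₀ := NNReal))).2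
      (inferInstanceAs (NormedField.valuation (K := K)).IsNontrivial)
  have : IsNonarchimedeanLocalField K := {}
  have h2 : ‖(2 : K)‖ = 1 := by
    rw [← map_ofNat (algebraMap ℚ_[p] K) 2, norm_algebraMap']
    have := (Padic.norm_natCast_eq_one_iff (p := p) (n := 2)).2
      ((Nat.coprime_primes Fact.out Nat.prime_two).2 hp)
    exact_mod_cast this
  refine ⟨(ValuativeRel.valuation K).integer, inferInstance, inferInstance, ?_, inferInstance, ?_⟩
  · have : HenselianRing (ValuativeRel.valuation K).integer
      (IsLocalRing.maximalIdeal (ValuativeRel.valuation K).integer) := inferInstance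
    exact ⟨fun f hf a h₁ h₂ ↦ HenselianRing.is_henselian f hf a h₁ (h₂.map _)⟩
  · rw [(Valuation.integer.integers (ValuativeRel.valuation K)).isUnit_iff_valuation_eq_one]
    refine (ValuativeRel.isEquiv (ValuativeRel.valuation K)
      (Valued.v (R := K) (Γ₀ := NNReal))).eq_one_iff_eq_one.2 ?_
    exact NNReal.eq h2

/-- Theorem 1.2 (number-theoretic content): `p` an odd prime, `K` a `p`-adic field,
`d, e ∈ K*` non-squares with `de ∉ (K*)²` (so `L = K(√d)` and `E = K(√e)` are
non-isomorphic quadratic extensions). Then either `-e ∉ N_{L/K}(L*)`, or there exists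
`x ∈ K*` with `x ∉ N_{L/K}(L*)` and `x² - e ∉ N_{L/K}(L*)`. -/
theorem stmt_9 (p : ℕ) [Fact p.Prime] (hp : p ≠ 2)
    (K : Type*) [Field K] [Algebra ℚ_[p] K] [FiniteDimensional ℚ_[p] K]
    (d e : K) (hd0 : d ≠ 0) (he0 : e ≠ 0)
    (hd : ¬ IsSquare d) (he : ¬ IsSquare e) (hde : ¬ IsSquare (d * e))
    (L : Type*) [Field L] [Algebra K L] (hL2 : finrank K L = 2)
    (hLd : ∃ s : L, s ^ 2 = algebraMap K L d) :
    -e ∉ normGroup K L ∨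
      ∃ x : K, x ≠ 0 ∧ x ∉ normGroup K L ∧ x ^ 2 - e ∉ normGroup K L := by
  obtain ⟨s, hs⟩ := hLd
  obtain ⟨R, _, _, _, _, h2⟩ := Padic.exists_henselian_valuationSubring p hp K
  obtain ⟨g, hgu, hg⟩ := exists_isUnit_not_isSquare_residue h2
  obtain ⟨ϖ, hϖ⟩ := IsDiscreteValuationRing.exists_irreducible R
  obtain ⟨y, z, hyz⟩ := exists_sq_add_sq_eq_neg_one h2
  have hw0 {w : R} (hw : w ≠ 0) : algebraMap R K w ≠ 0 :=
    (map_ne_zero_iff _ (IsFractionRing.injective R K)).2 hw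
  have hcls (x : K) (hx : x ≠ 0) :
      IsSquare x ∨ IsSquare (x * d) ∨ IsSquare (x * e) ∨ IsSquare (x * (d * e)) := by
    refine isSquare_or_isSquare_mul_of_four_classes
      ![1, algebraMap R K g, algebraMap R K ϖ, algebraMap R K (ϖ * g)] (fun i ↦ ?_)
      (fun x hx ↦ ?_) hd0 he0 hd he hde hx
    · fin_cases i
      exacts [one_ne_zero, hw0 hgu.ne_zero, hw0 hϖ.ne_zero,
        hw0 (mul_ne_zero hϖ.ne_zero hgu.ne_zero)]
    · rcases isSquare_or_isSquare_algebraMap_mul h2 hϖ hgu hg hx with h | h | h | h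
      exacts [⟨0, by simpa using h⟩, ⟨1, h⟩, ⟨2, h⟩, ⟨3, h⟩]
  have hsum : ∃ y z : K, y ^ 2 + z ^ 2 = -1 :=
    ⟨algebraMap R K y, algebraMap R K z, by rw [← map_pow, ← map_pow, ← map_add, hyz]; simp⟩
  simp only [mem_normGroup_iff hL2 hd hs]
  rcases not_isNormForm_neg_or_exists hd0 he0 hcls (exists_not_isNormForm h2 hd0 hd) hsum with
    h | ⟨x, hx0, hx, hxe⟩
  · exact .inl fun h' ↦ h h'.2
  · exact .inr ⟨x, hx0, fun h' ↦ hx h'.2, fun h' ↦ hxe h'.2⟩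
end
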